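/- For any translation-invariant Gibbs measure μ for the 1-2 model on the hexagonal lattice ℍ (with any weights a, b, c > 0) and any of the six local configuration types τ₀ ∈ {001, 010, 011, 100, 101, 110}, μ-almost every 1-2 model configuration ω ∈ Ω has at most one infinite τ₀-cluster. -/

import Mathlib

open MeasureTheory

/-- Vertices of the hexagonal lattice: `(x, y, t)` with `t = true` the "upper" vertex. -/
abbrev HexV : Type := ℤ × ℤ × Bool

/-- Edges of the hexagonal lattice: `(x, y, k)` with `k = 0` the a-type (horizontal) edge
joining `(x,y,1)` to `(x,y,0)`, `k = 1` the b-type edge joining `(x,y,1)` to `(x+1,y,0)`,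
`k = 2` the c-type edge joining `(x,y,1)` to `(x,y+1,0)`. -/
abbrev HexE : Type := ℤ × ℤ × Fin 3

/-- A configuration assigns present/absent to each edge. -/
abbrev Config : Type := HexE → Bool

def end1 (e : HexE) : HexV := (e.1, e.2.1, true)

def end2 (e : HexE) : HexV :=
  if e.2.2 = 0 then (e.1, e.2.1, false)
  else if e.2.2 = 1 then (e.1 + 1, e.2.1, false)
  else (e.1, e.2.1 + 1, false)

/-- The edges incident to a vertex, indexed so that index `0` is the a-type (horizontal)
edge, index `1` the b-type edge, index `2` the c-type edge. -/
def edgesAt (v : HexV) : Fin 3 → HexE := fun i =>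
  if v.2.2 then (v.1, v.2.1, i)
  else if i = 0 then (v.1, v.2.1, 0)
  else if i = 1 then (v.1 - 1, v.2.1, 1)
  else (v.1, v.2.1 - 1, 2)

/-- Local configuration of `ω` at `v`: digit `0` (rightmost) is the a-type edge,
digit `1` the b-type edge, digit `2` (leftmost) the c-type edge. -/
def localConf (ω : Config) (v : HexV) : Fin 3 → Bool := fun i => ω (edgesAt v i)

/-- A 1-2 model configuration: every vertex is incident to one or two present edges. -/
def IsConfig (ω : Config) : Prop :=
  ∀ v : HexV,
    1 ≤ (Finset.univ.filter fun i : Fin 3 => localConf ω v i = true).card ∧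
    (Finset.univ.filter fun i : Fin 3 => localConf ω v i = true).card ≤ 2

/-- The local configuration type `{001}` : only the a-type (horizontal) edge is present. -/
def conf001 : Fin 3 → Bool := ![true, false, false]

/-- The six admissible local configuration types `{001},…,{110}`. -/
def validConf (τ : Fin 3 → Bool) : Prop :=
  τ ≠ ![false, false, false] ∧ τ ≠ ![true, true, true]

/-- Vertex weight: `w(001)=w(110)=a`, `w(010)=w(101)=b`, `w(011)=w(100)=c`. -/
def weight (a b c : ℝ) (f : Fin 3 → Bool) : ℝ :=
  match f 2, f 1, f 0 with
  | false, false, true  => a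
  | true,  true,  false => a
  | false, true,  false => b
  | true,  false, true  => b
  | false, true,  true  => c
  | true,  false, false => c
  | false, false, false => 0
  | true,  true,  true  => 0

/-- Adjacency in the hexagonal lattice. -/
def HexAdj (v w : HexV) : Prop :=
  v ≠ w ∧ ∃ e : HexE, (v = end1 e ∨ v = end2 e) ∧ (w = end1 e ∨ w = end2 e)

/-- Adjacency restricted to a vertex set `S`. -/
def adjIn (S : Set HexV) (v w : HexV) : Prop := HexAdj v w ∧ v ∈ S ∧ w ∈ S

/-- The connected component of `v` in the subgraph induced on `S`. -/
def compOf (S : Set HexV) (v : HexV) : Set HexV := {w | Relation.ReflTransGen (adjIn S) v w}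

/-- `C` is a connected component of the subgraph induced on `S`. -/
def IsCompOf (S : Set HexV) (C : Set HexV) : Prop := ∃ v ∈ S, C = compOf S v

/-- Vertices whose local configuration equals `τ`. -/
def confSet (ω : Config) (τ : Fin 3 → Bool) : Set HexV := {v | localConf ω v = τ}

/-- A `τ`-cluster of `ω`. -/
def IsCluster (ω : Config) (τ : Fin 3 → Bool) (C : Set HexV) : Prop :=
  IsCompOf (confSet ω τ) C

/-- The number of infinite `τ`-clusters of `ω`, as an extended natural number. -/
noncomputable def numInfClusters (ω : Config) (τ : Fin 3 → Bool) : ℕ∞ :=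
  {C : Set HexV | IsCluster ω τ C ∧ C.Infinite}.encard

def endsFinset (e : HexE) : Finset HexV := {end1 e, end2 e}

/-- Vertices incident to an edge of `F`. -/
def verts (F : Finset HexE) : Finset HexV := F.biUnion endsFinset

/-- Edges sharing an endpoint with an edge of `F`. -/
def edgeNbhd (F : Finset HexE) : Set HexE :=
  {e' | ∃ e ∈ F,
    end1 e = end1 e' ∨ end1 e = end2 e' ∨ end2 e = end1 e' ∨ end2 e = end2 e'}

/-- Cylinder event: configurations agreeing with `σ` on `S`. -/
def cyl (S : Set HexE) (σ : Config) : Set Config := {ω | ∀ e ∈ S, ω e = σ e}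

/-- A Gibbs measure for the 1-2 model with weights `a`, `b`, `c`. -/
def IsGibbs (a b c : ℝ) (μ : Measure Config) : Prop :=
  IsProbabilityMeasure μ ∧ μ {ω | IsConfig ω} = 1 ∧
  ∀ F : Finset HexE, ∀ σ τ : Config, IsConfig σ → IsConfig τ →
    (∀ e ∉ F, σ e = τ e) →
    μ (cyl (↑F ∪ edgeNbhd F) σ) *
        ENNReal.ofReal (∏ v ∈ verts F, weight a b c (localConf τ v)) =
      μ (cyl (↑F ∪ edgeNbhd F) τ) *
        ENNReal.ofReal (∏ v ∈ verts F, weight a b c (localConf σ v))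

/-- Translation of edges by `g ∈ ℤ²`. -/
def shiftE (g : ℤ × ℤ) (e : HexE) : HexE := (e.1 + g.1, e.2.1 + g.2, e.2.2)

/-- Induced translation action on configurations. -/
def shiftConfig (g : ℤ × ℤ) (ω : Config) : Config := fun e => ω (shiftE g e)

/-- Translation invariance of a measure on configurations. -/
def TransInvariant (μ : Measure Config) : Prop :=
  ∀ g : ℤ × ℤ, μ.map (shiftConfig g) = μ

/-- Ergodicity: every translation-invariant measurable event has measure `0` or `1`. -/
def IsErgodicTI (μ : Measure Config) : Prop :=
  ∀ A : Set Config, MeasurableSet A → (∀ g, shiftConfig g ⁻¹' A = A) → μ A = 0 ∨ μ A = 1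

/-- The box `B_n(i,j)`. -/
def box (n : ℕ) (i j : ℤ) : Set HexV :=
  {v | |v.1 - i| ≤ (n : ℤ) ∧ |v.2.1 - j| ≤ (n : ℤ)}

/-- Vertices outside `B` adjacent to a vertex of `B`. -/
def outerBoundary (B : Set HexV) : Set HexV := {v | v ∉ B ∧ ∃ w ∈ B, HexAdj v w}

/-- `B_N(i,j)` is an encounter box for `ω` with respect to the infinite `{001}`-cluster `C`. -/
def IsEncounterBoxWrt (ω : Config) (N : ℕ) (i j : ℤ) (C : Set HexV) : Prop :=
  IsCluster ω conf001 C ∧ C.Infinite ∧ box N i j ⊆ C ∧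
  (∀ D, IsCompOf (C \ box (N + 2) i j) D → D.Infinite) ∧
  {D : Set HexV | IsCompOf (C \ box (N + 2) i j) D ∧ D.Infinite}.encard = 3

/-- `B_N(i,j)` is an encounter box for `ω`. -/
def IsEncounterBox (ω : Config) (N : ℕ) (i j : ℤ) : Prop :=
  ∃ C : Set HexV, IsEncounterBoxWrt ω N i j C

/-- A 3-partition of `Y`: an unordered triple of pairwise disjoint nonempty sets with union `Y`. -/
def IsThreePartition {α : Type*} (Y : Set α) (P : Set (Set α)) : Prop :=
  ∃ P₁ P₂ P₃ : Set α, P = {P₁, P₂, P₃} ∧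
    P₁.Nonempty ∧ P₂.Nonempty ∧ P₃.Nonempty ∧
    Disjoint P₁ P₂ ∧ Disjoint P₁ P₃ ∧ Disjoint P₂ P₃ ∧
    P₁ ∪ P₂ ∪ P₃ = Y

/-- Two 3-partitions are compatible if their parts can be ordered so that `Q₂ ∪ Q₃ ⊆ P₁`. -/
def CompatiblePartitions {α : Type*} (P Q : Set (Set α)) : Prop :=
  ∃ P₁ ∈ P, ∃ Q₁ ∈ Q, ∀ R ∈ Q, R ≠ Q₁ → R ⊆ P₁

/-!
The argument is that of Burton and Keane. On the event that there are two infinite `τ`-clusters,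
choose a large finite region meeting the infinite clusters in question and give every edge inside
it the state prescribed by `τ`. If there were just two infinite clusters they are now one, which is
impossible: a translation-invariant event cannot be left with positive probability by changing
finitely many edges, because it is approximated by events that do not depend on these edges. If
there were three, the region is now a trifurcation; but disjoint trifurcations in a box inject into
the boundary of the box, so by translation invariance a given region is almost surely not one.

The 1-2 model has hard constraints, so a region cannot be filled at will. A rectangle with two
opposite corner cells cut off works, provided that each missing cell contains the right vertex
already of type `τ`. Poincaré recurrence along the diagonal supplies such vertices arbitrarily far
out in both directions. That filling, once possible, distorts probabilities by a bounded factor only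
is read off from the Gibbs property.
-/

/-! ### Connectivity in a vertex subset -/

section Connectivity

variable {V : Type*} {G : SimpleGraph V} {S T D : Set V} {x y z : V}

/-- `x` and `y` are joined by a path of `G` inside `S`. The empty path is allowed, so every vertex,
even one outside `S`, is connected to itself; for the hexagonal lattice this is the relation
underlying `compOf`. -/
def ConnIn (G : SimpleGraph V) (S : Set V) (x y : V) : Prop :=
  Relation.ReflTransGen (fun v w => G.Adj v w ∧ v ∈ S ∧ w ∈ S) x y

/-- The connected component of `x` in the subgraph of `G` induced on `S`. For `x ∉ S` it is `{x}`;
in particular an infinite component always has its base point in `S`. -/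
def compIn (G : SimpleGraph V) (S : Set V) (x : V) : Set V := {y | ConnIn G S x y}

/-- The subgraph of `G` induced on `D` is connected or empty. -/
def IsPreconnIn (G : SimpleGraph V) (D : Set V) : Prop := ∀ x ∈ D, ∀ y ∈ D, ConnIn G D x y

namespace ConnIn

theorem refl (G : SimpleGraph V) (S : Set V) (x : V) : ConnIn G S x x :=
  Relation.ReflTransGen.refl

theorem trans (hxy : ConnIn G S x y) (hyz : ConnIn G S y z) : ConnIn G S x z :=
  Relation.ReflTransGen.trans hxy hyz

theorem of_adj (h : G.Adj x y) (hx : x ∈ S) (hy : y ∈ S) : ConnIn G S x y :=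
  Relation.ReflTransGen.single ⟨h, hx, hy⟩

theorem symm (h : ConnIn G S x y) : ConnIn G S y x :=
  haveI : Std.Symm fun v w => G.Adj v w ∧ v ∈ S ∧ w ∈ S := ⟨fun _ _ h => ⟨h.1.symm, h.2.2, h.2.1⟩⟩
  Relation.ReflTransGen.stdSymm.symm _ _ h

theorem mono (hST : S ⊆ T) (h : ConnIn G S x y) : ConnIn G T x y :=
  Relation.ReflTransGen.mono (fun _ _ h => ⟨h.1, hST h.2.1, hST h.2.2⟩) _ _ h

theorem right_mem (h : ConnIn G S x y) (hx : x ∈ S) : y ∈ S := by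
  rcases Relation.ReflTransGen.cases_tail h with rfl | ⟨_, _, hzy⟩
  exacts [hx, hzy.2.2]

theorem of_compIn_subset (h : ConnIn G S x y) (hT : compIn G S x ⊆ T) : ConnIn G T x y := by
  induction h with
  | refl => exact refl G T x
  | tail hxz hzy ih =>
    exact ih.trans (of_adj hzy.1 (hT hxz) (hT (Relation.ReflTransGen.tail hxz hzy)))

theorem map {V' : Type*} {G' : SimpleGraph V'} (φ : G →g G') {S' : Set V'}
    (h : ConnIn G (φ ⁻¹' S') x y) : ConnIn G' S' (φ x) (φ y) :=
  Relation.ReflTransGen.lift φ (p := fun v w => G'.Adj v w ∧ v ∈ S' ∧ w ∈ S')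
    (fun _ _ h => ⟨φ.map_adj h.1, h.2⟩) _ _ h

end ConnIn

theorem mem_compIn_self : x ∈ compIn G S x := ConnIn.refl G S x

theorem mem_of_infinite_compIn (h : (compIn G S x).Infinite) : x ∈ S := by
  by_contra hx
  refine h ((Set.finite_singleton x).subset fun y hxy => ?_)
  rcases Relation.ReflTransGen.cases_head hxy with rfl | ⟨_, hxz, _⟩
  exacts [rfl, absurd hxz.2.1 hx]

theorem infinite_compIn_of_subset (h : (compIn G S x).Infinite) (hT : compIn G S x ⊆ T) :
    (compIn G T x).Infinite :=
  h.mono fun _ hy => ConnIn.of_compIn_subset hy hT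

theorem IsPreconnIn.connIn (hD : IsPreconnIn G D) (hDS : D ⊆ S) (hx : x ∈ D) (hy : y ∈ D) :
    ConnIn G S x y :=
  (hD x hx y hy).mono hDS

section Iso

variable {V' : Type*} {G' : SimpleGraph V'} (φ : G ≃g G') {S' : Set V'}

theorem connIn_preimage_iff : ConnIn G (φ ⁻¹' S') x y ↔ ConnIn G' S' (φ x) (φ y) := by
  refine ⟨fun h => h.map φ.toHom, fun h => ?_⟩
  have hS : φ.symm ⁻¹' (φ ⁻¹' S') = S' := φ.toEquiv.symm_preimage_preimage S'
  rw [← hS] at h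
  simpa using h.map φ.symm.toHom

theorem infinite_compIn_preimage_iff :
    (compIn G (φ ⁻¹' S') x).Infinite ↔ (compIn G' S' (φ x)).Infinite := by
  have h : compIn G (φ ⁻¹' S') x = φ ⁻¹' compIn G' S' (φ x) :=
    Set.ext fun _ => connIn_preimage_iff φ
  rw [h]
  exact not_congr
    ⟨fun hf => hf.of_preimage φ.surjective, fun hf => hf.preimage φ.injective.injOn⟩

end Iso

/-! ### Removing or adding a finite region -/

variable {R S' : Set V} {u : V}

/-- Two distinct infinite components in the subgraph induced on `S`. -/
def HasTwoInfiniteComps (G : SimpleGraph V) (S : Set V) : Prop :=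
  ∃ x y, (compIn G S x).Infinite ∧ (compIn G S y).Infinite ∧ ¬ ConnIn G S x y

theorem exists_infinite_compIn_diff (hG : ∀ v, (G.neighborSet v).Finite) (hR : R.Finite)
    (hu : u ∈ R) (hinf : (compIn G S u).Infinite) :
    ∃ w ∈ S \ R, (∃ x ∈ R ∩ S, G.Adj x w) ∧ ConnIn G S u w ∧ (compIn G (S \ R) w).Infinite := by
  by_contra! hfin
  let exits := {w | w ∈ S \ R ∧ (∃ x ∈ R ∩ S, G.Adj x w) ∧ ConnIn G S u w}
  have hexits : exits.Finite := (hR.biUnion fun x _ => hG x).subset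
    fun w hw => let ⟨x, hx, hxw⟩ := hw.2.1; Set.mem_biUnion hx.1 hxw
  have hcover : compIn G S u ⊆ R ∪ ⋃ w ∈ exits, compIn G (S \ R) w := by
    intro y (huy : ConnIn G S u y)
    induction huy with
    | refl => exact Or.inl hu
    | @tail y z huy hyz ih =>
      by_cases hz : z ∈ R
      · exact Or.inl hz
      refine Or.inr (Set.mem_iUnion₂.2 ?_)
      by_cases hy : y ∈ R
      · exact ⟨z, ⟨⟨hyz.2.2, hz⟩, ⟨y, ⟨hy, hyz.2.1⟩, hyz.1⟩, huy.tail hyz⟩, mem_compIn_self⟩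
      · obtain ⟨w, hw, hwy⟩ := Set.mem_iUnion₂.1 (ih.resolve_left hy)
        exact ⟨w, hw, ConnIn.trans hwy (.of_adj hyz.1 ⟨hyz.2.1, hy⟩ ⟨hyz.2.2, hz⟩)⟩
  refine hinf ((hR.union (hexits.biUnion fun w hw => ?_)).subset hcover)
  exact hfin w hw.1 hw.2.1 hw.2.2

theorem not_hasTwoInfiniteComps_of_fill (hSS' : S ⊆ S') (hS'R : S' ⊆ S ∪ R)
    (hR : IsPreconnIn G (S' ∩ R))
    (hall : ∀ v, (compIn G S v).Infinite → ∃ u ∈ R, ConnIn G S v u) :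
    ¬ HasTwoInfiniteComps G S' := by
  have meets : ∀ v, (compIn G S' v).Infinite → ∃ x ∈ S' ∩ R, ConnIn G S' v x := by
    intro v hinf
    have hv := mem_of_infinite_compIn hinf
    by_cases hvR : ∃ x ∈ R, ConnIn G S' v x
    · obtain ⟨x, hx, hvx⟩ := hvR
      exact ⟨x, ⟨hvx.right_mem hv, hx⟩, hvx⟩
    · push Not at hvR
      have hsub : compIn G S' v ⊆ S := fun z hz =>
        (hS'R (ConnIn.right_mem hz hv)).resolve_right fun h => hvR z h hz
      obtain ⟨u, hu, hvu⟩ := hall v (infinite_compIn_of_subset hinf hsub)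
      exact absurd (hvu.mono hSS') (hvR u hu)
  rintro ⟨v, v', hv, hv', hvv'⟩
  obtain ⟨x, hx, hvx⟩ := meets v hv
  obtain ⟨y, hy, hvy⟩ := meets v' hv'
  exact hvv' ((hvx.trans (hR.connIn Set.inter_subset_left hx hy)).trans hvy.symm)

end Connectivity

/-! ### Trifurcations -/

section Trifurcation

variable {V : Type*} {G : SimpleGraph V} {S D D' U B : Set V} {w w' : Fin 3 → V} {x y : V}

/-- The connected set `D` is a trifurcation of `S`: removing it from `S` leaves at least three
distinct infinite components adjacent to `D`, with representatives `w 0`, `w 1`, `w 2`. -/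
structure IsTrifurcation (G : SimpleGraph V) (S D : Set V) (w : Fin 3 → V) : Prop where
  subset : D ⊆ S
  preconn : IsPreconnIn G D
  adj : ∀ i, ∃ x ∈ D, G.Adj x (w i)
  infinite : ∀ i, (compIn G (S \ D) (w i)).Infinite
  separated : Pairwise fun i j => ¬ ConnIn G (S \ D) (w i) (w j)

/-- The vertices of `P` represent distinct infinite components of `S \ U`, all adjacent to `U`. -/
structure IsEndFamily (G : SimpleGraph V) (S U : Set V) (P : Finset V) : Prop where
  adj : ∀ r ∈ P, ∃ x ∈ U, G.Adj x r
  infinite : ∀ r ∈ P, (compIn G (S \ U) r).Infinite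
  separated : (P : Set V).Pairwise fun r s => ¬ ConnIn G (S \ U) r s

/-- The vertices outside `B` with a neighbour in `B`; for the hexagonal lattice this is
`outerBoundary B`. -/
def vertexBoundary (G : SimpleGraph V) (B : Set V) : Set V := {v | v ∉ B ∧ ∃ u ∈ B, G.Adj v u}

theorem exists_isTrifurcation_of_fill {S' R : Set V} (hG : ∀ v, (G.neighborSet v).Finite)
    (hR : R.Finite) (hSS' : S ⊆ S') (hS'R : S' ⊆ S ∪ R) (hconn : IsPreconnIn G (S' ∩ R))
    (u : Fin 3 → V) (huR : ∀ i, u i ∈ R) (hinf : ∀ i, (compIn G S (u i)).Infinite)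
    (hsep : Pairwise fun i j => ¬ ConnIn G S (u i) (u j)) :
    ∃ w, IsTrifurcation G S' (S' ∩ R) w := by
  have hdiff : S' \ (S' ∩ R) = S \ R := by
    rw [Set.sdiff_self_inter]
    exact Set.ext fun x => ⟨fun h => ⟨(hS'R h.1).resolve_right h.2, h.2⟩, fun h => ⟨hSS' h.1, h.2⟩⟩
  choose w _ hadj huw hw using fun i => exists_infinite_compIn_diff hG hR (huR i) (hinf i)
  refine ⟨w, Set.inter_subset_left, hconn, fun i => ?_, hdiff ▸ hw, fun i j hij hc => ?_⟩
  · obtain ⟨x, hx, hxw⟩ := hadj i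
    exact ⟨x, ⟨hSS' hx.2, hx.1⟩, hxw⟩
  · rw [hdiff] at hc
    exact hsep hij (((huw i).trans (hc.mono Set.sdiff_subset)).trans (huw j).symm)

namespace IsTrifurcation

theorem map {V' : Type*} {G' : SimpleGraph V'} (φ : G ≃g G') {S' D' : Set V'}
    (h : IsTrifurcation G (φ ⁻¹' S') (φ ⁻¹' D') w) : IsTrifurcation G' S' D' (φ ∘ w) where
  subset := (Set.preimage_subset_preimage_iff (by simp [φ.surjective.range_eq])).1 h.subset
  preconn x hx y hy := by
    have := h.preconn (φ.symm x) (by simpa using hx) (φ.symm y) (by simpa using hy)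
    simpa using (connIn_preimage_iff φ).1 this
  adj i := let ⟨x, hx, hxw⟩ := h.adj i; ⟨φ x, hx, φ.map_adj_iff.2 hxw⟩
  infinite i := (infinite_compIn_preimage_iff φ).1 (h.infinite i)
  separated i j hij hc := h.separated hij ((connIn_preimage_iff φ).2 hc)

theorem mem (h : IsTrifurcation G S D w) (i : Fin 3) : w i ∈ S \ D :=
  mem_of_infinite_compIn (h.infinite i)

theorem injective (h : IsTrifurcation G S D w) : Function.Injective w := fun i _ hij =>
  of_not_not fun hne => h.separated hne (hij ▸ ConnIn.refl G _ (w i))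

theorem isEndFamily [DecidableEq V] (h : IsTrifurcation G S D w) (I : Finset (Fin 3)) :
    IsEndFamily G S D (I.image w) where
  adj := Finset.forall_mem_image.2 fun i _ => h.adj i
  infinite := Finset.forall_mem_image.2 fun i _ => h.infinite i
  separated := by
    rw [Finset.coe_image, h.injective.injOn.pairwise_image]
    exact fun _ _ _ _ hij => h.separated hij

/-- The set `D'` lies in a single component of `S \ D`. -/
theorem exists_two_branches_disjoint (h : IsTrifurcation G S D w) (hD' : IsPreconnIn G D')
    (hsub : D' ⊆ S \ D) :
    ∃ I : Finset (Fin 3), 2 ≤ I.card ∧ ∀ i ∈ I, Disjoint (compIn G (S \ D) (w i)) D' := by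
  classical
  let I := {i | Disjoint (compIn G (S \ D) (w i)) D'}.toFinset
  refine ⟨I, ?_, fun i hi => Set.mem_toFinset.1 hi⟩
  have hcompl : Iᶜ.card ≤ 1 := by
    refine Finset.card_le_one.2 fun i hi j hj => of_not_not fun hij => ?_
    simp only [I, Finset.mem_compl, Set.mem_toFinset, Set.mem_ofPred_eq,
      Set.not_disjoint_iff] at hi hj
    obtain ⟨x, hix, hx⟩ := hi
    obtain ⟨y, hjy, hy⟩ := hj
    exact h.separated hij ((ConnIn.trans hix (hD'.connIn hsub hx hy)).trans (ConnIn.symm hjy))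
  have := Finset.card_add_card_compl I
  simp only [Fintype.card_fin] at this
  omega

theorem branch_subset_branch (h' : IsTrifurcation G S D' w') (hD' : D' ⊆ S \ D) {v : V} {i : Fin 3}
    (hmeet : ¬ Disjoint (compIn G (S \ D) v) D')
    (havoid : Disjoint (compIn G (S \ D') (w' i)) D) :
    compIn G (S \ D') (w' i) ⊆ compIn G (S \ D) v := by
  intro y hy
  have hsub : compIn G (S \ D') (w' i) ⊆ S \ D := fun z hz =>
    ⟨(ConnIn.right_mem hz (h'.mem i)).1, fun hzD => Set.disjoint_left.1 havoid hz hzD⟩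
  obtain ⟨x, hvx, hx⟩ := Set.not_disjoint_iff.1 hmeet
  obtain ⟨x', hx', hadj⟩ := h'.adj i
  have hvx' : ConnIn G (S \ D) v x' := ConnIn.trans hvx (h'.preconn.connIn hD' hx hx')
  exact (hvx'.trans (.of_adj hadj (hD' hx') (hsub mem_compIn_self))).trans
    (ConnIn.of_compIn_subset hy hsub)

/-- Among the pairs of branches, one that meets the fewest other trifurcations meets none. -/
theorem exists_two_branches_disjoint_all {ι : Type*} {J : Finset ι} (hJ : J.Nonempty)
    {D : ι → Set V} {w : ι → Fin 3 → V} (hT : ∀ j ∈ J, IsTrifurcation G S (D j) (w j))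
    (hdisj : (J : Set ι).PairwiseDisjoint D) :
    ∃ j ∈ J, ∃ I : Finset (Fin 3), 2 ≤ I.card ∧
      ∀ i ∈ I, ∀ m ∈ J, Disjoint (compIn G (S \ D j) (w j i)) (D m) := by
  classical
  let met (p : ι × Finset (Fin 3)) : Finset ι :=
    {m ∈ J | ∃ i ∈ p.2, ¬ Disjoint (compIn G (S \ D p.1) (w p.1 i)) (D m)}
  obtain ⟨⟨j, I⟩, hjI, hmin⟩ := Finset.exists_min_image
    (J ×ˢ (Finset.univ.filter fun I : Finset (Fin 3) => 2 ≤ I.card)) (fun p => (met p).card)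
    (hJ.product ⟨Finset.univ, by simp⟩)
  simp only [Finset.mem_product, Finset.mem_filter, Finset.mem_univ, true_and] at hjI hmin
  refine ⟨j, hjI.1, I, hjI.2, fun i hi m hm => of_not_not fun hmeet => ?_⟩
  have hmj : m ≠ j := by
    rintro rfl
    obtain ⟨x, hx, hxD⟩ := Set.not_disjoint_iff.1 hmeet
    exact (ConnIn.right_mem hx ((hT m hm).mem i)).2 hxD
  have hsub : ∀ {k l}, k ∈ J → l ∈ J → k ≠ l → D k ⊆ S \ D l := fun hk hl hkl =>
    Set.subset_sdiff.2 ⟨(hT _ hk).subset, hdisj hk hl hkl⟩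
  obtain ⟨I', hI', hdisjI'⟩ := (hT m hm).exists_two_branches_disjoint (hT j hjI.1).preconn
    (hsub hjI.1 hm hmj.symm)
  refine (hmin (m, I') ⟨hm, hI'⟩).not_gt (Finset.card_lt_card ?_)
  refine (Finset.ssubset_iff_of_subset fun k hk => ?_).2 ⟨m, ?_, fun hmet => ?_⟩
  · obtain ⟨hkJ, i', hi', hk⟩ := Finset.mem_filter.1 hk
    refine Finset.mem_filter.2 ⟨hkJ, i, hi, fun hd => hk (hd.mono_left ?_)⟩
    exact (hT m hm).branch_subset_branch (hsub hm hjI.1 hmj) hmeet (hdisjI' i' hi')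
  · exact Finset.mem_filter.2 ⟨hm, i, hi, hmeet⟩
  · obtain ⟨-, i', -, hmeet'⟩ := Finset.mem_filter.1 hmet
    obtain ⟨x, hx, hxD⟩ := Set.not_disjoint_iff.1 hmeet'
    exact (ConnIn.right_mem hx ((hT m hm).mem i')).2 hxD

end IsTrifurcation

namespace IsEndFamily

variable {P Q : Finset V}

theorem mem (h : IsEndFamily G S U P) {r : V} (hr : r ∈ P) : r ∈ S \ U :=
  mem_of_infinite_compIn (h.infinite r hr)

theorem of_subset (h : IsEndFamily G S U P) (hQ : Q ⊆ P) : IsEndFamily G S U Q where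
  adj r hr := h.adj r (hQ hr)
  infinite r hr := h.infinite r (hQ hr)
  separated := h.separated.mono (Finset.coe_subset.2 hQ)

theorem union_right (h : IsEndFamily G S U P) (hD : ∀ r ∈ P, Disjoint (compIn G (S \ U) r) D) :
    IsEndFamily G S (U ∪ D) P where
  adj r hr := let ⟨x, hx, hxr⟩ := h.adj r hr; ⟨x, Or.inl hx, hxr⟩
  infinite r hr := by
    refine infinite_compIn_of_subset (h.infinite r hr) fun z hz => ?_
    rw [← Set.sdiff_sdiff]
    exact ⟨ConnIn.right_mem hz (h.mem hr), Set.disjoint_left.1 (hD r hr) hz⟩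
  separated r hr s hs hrs hc :=
    h.separated hr hs hrs (hc.mono (Set.sdiff_subset_sdiff_right Set.subset_union_left))

theorem union [DecidableEq V] (hP : IsEndFamily G S U P) (hQ : IsEndFamily G S U Q)
    (hPQ : ∀ r ∈ P, ∀ s ∈ Q, ¬ ConnIn G (S \ U) r s) : IsEndFamily G S U (P ∪ Q) where
  adj := Finset.forall_mem_union.2 ⟨hP.adj, hQ.adj⟩
  infinite := Finset.forall_mem_union.2 ⟨hP.infinite, hQ.infinite⟩
  separated := by
    rw [Finset.coe_union, Set.pairwise_union]
    exact ⟨hP.separated, hQ.separated, fun r hr s hs _ =>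
      ⟨hPQ r hr s hs, fun hc => hPQ r hr s hs hc.symm⟩⟩

theorem card_filter_connIn_le_one (hP : IsEndFamily G S U P) (hD : IsPreconnIn G D)
    (hDU : D ⊆ S \ U) [DecidablePred fun r => ∃ x ∈ D, ConnIn G (S \ U) r x] :
    (P.filter fun r => ∃ x ∈ D, ConnIn G (S \ U) r x).card ≤ 1 := by
  refine Finset.card_le_one.2 fun r hr s hs => of_not_not fun hrs => ?_
  obtain ⟨hr, x, hx, hrx⟩ := Finset.mem_filter.1 hr
  obtain ⟨hs, y, hy, hsy⟩ := Finset.mem_filter.1 hs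
  exact hP.separated hr hs hrs ((hrx.trans (hD.connIn hDU hx hy)).trans hsy.symm)

/-- Only the end of `P` whose component contains `D` is lost when passing from `U` to `U ∪ D`. -/
theorem exists_union (hP : IsEndFamily G S U P) (hD : IsPreconnIn G D) (hDU : D ⊆ S \ U)
    (hQ : IsEndFamily G S D Q) (hQU : ∀ r ∈ Q, Disjoint (compIn G (S \ D) r) U) :
    ∃ P', IsEndFamily G S (U ∪ D) P' ∧ P.card + Q.card ≤ P'.card + 1 := by
  classical
  let P₀ := P.filter fun r => ¬ ∃ x ∈ D, ConnIn G (S \ U) r x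
  have hP₀ : IsEndFamily G S (U ∪ D) P₀ := by
    refine (hP.of_subset (Finset.filter_subset _ _)).union_right fun r hr => ?_
    exact Set.disjoint_left.2 fun x hrx hx => (Finset.mem_filter.1 hr).2 ⟨x, hx, hrx⟩
  have hQ' : IsEndFamily G S (U ∪ D) Q := Set.union_comm D U ▸ hQ.union_right hQU
  have hPQ : ∀ r ∈ P₀, ∀ s ∈ Q, ¬ ConnIn G (S \ (U ∪ D)) r s := by
    intro r hr s hs hrs
    obtain ⟨x, hx, hxs⟩ := hQ.adj s hs
    have hsub : S \ (U ∪ D) ⊆ S \ U := Set.sdiff_subset_sdiff_right Set.subset_union_left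
    refine (Finset.mem_filter.1 hr).2 ⟨x, hx, (hrs.mono hsub).trans ?_⟩
    exact .of_adj hxs.symm (hsub (hQ'.mem hs)) (hDU hx)
  have hdisj : Disjoint P₀ Q := Finset.disjoint_left.2 fun r hr hr' =>
    hPQ r hr r hr' (ConnIn.refl G _ r)
  refine ⟨P₀ ∪ Q, hP₀.union hQ' hPQ, ?_⟩
  have hsplit : _ + P₀.card = P.card := P.card_filter_add_card_filter_not _
  have hlost := hP.card_filter_connIn_le_one hD hDU
  rw [Finset.card_union_of_disjoint hdisj]
  omega

end IsEndFamily

theorem exists_isEndFamily_iUnion {ι : Type*} (J : Finset ι) {D : ι → Set V} {w : ι → Fin 3 → V}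
    (hT : ∀ j ∈ J, IsTrifurcation G S (D j) (w j)) (hdisj : (J : Set ι).PairwiseDisjoint D) :
    ∃ P, IsEndFamily G S (⋃ j ∈ J, D j) P ∧ J.card ≤ P.card := by
  classical
  induction hn : J.card generalizing J with
  | zero => exact ⟨∅, ⟨by simp, by simp, by simp⟩, by simp⟩
  | succ n ih =>
    obtain ⟨j, hj, I, hI, hleaf⟩ := IsTrifurcation.exists_two_branches_disjoint_all
      (Finset.card_pos.1 (by omega)) hT hdisj
    obtain ⟨P, hP, hcard⟩ := ih (J.erase j) (fun i hi => hT i (Finset.mem_of_mem_erase hi))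
      (hdisj.subset (Finset.coe_subset.2 (J.erase_subset j)))
      (by rw [Finset.card_erase_of_mem hj, hn, Nat.add_sub_cancel])
    have hDU : D j ⊆ S \ ⋃ i ∈ J.erase j, D i := by
      refine Set.subset_sdiff.2 ⟨(hT j hj).subset, Set.disjoint_iUnion₂_right.2 fun i hi => ?_⟩
      exact hdisj hj (Finset.mem_of_mem_erase hi) (Finset.ne_of_mem_erase hi).symm
    obtain ⟨P', hP', hcard'⟩ := hP.exists_union (hT j hj).preconn hDU ((hT j hj).isEndFamily I)
      (Finset.forall_mem_image.2 fun i hi => Set.disjoint_iUnion₂_right.2 fun m hm =>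
        hleaf i hi m (Finset.mem_of_mem_erase hm))
    rw [Finset.card_image_of_injective I (hT j hj).injective] at hcard'
    refine ⟨P', ?_, by omega⟩
    rwa [← Finset.insert_erase hj, Finset.set_biUnion_insert, Set.union_comm]

theorem exists_connIn_vertexBoundary (h : ConnIn G S x y) (hx : x ∈ B) (hy : y ∉ B) :
    ∃ z ∈ vertexBoundary G B, ConnIn G S x z := by
  induction h with
  | refl => exact absurd hx hy
  | @tail y z hxy hyz ih =>
    by_cases hyB : y ∈ B
    · exact ⟨z, ⟨hy, y, hyB, hyz.1.symm⟩, hxy.tail hyz⟩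
    · exact ih hyB

theorem IsEndFamily.card_le {P W : Finset V} (hP : IsEndFamily G S U P) (hB : B.Finite)
    (hUB : U ⊆ B) (hW : vertexBoundary G B ⊆ W) : P.card ≤ W.card := by
  have hexit : ∀ r ∈ P, ∃ z ∈ W, ConnIn G (S \ U) r z := by
    intro r hr
    obtain ⟨y, hy, hyB⟩ := (hP.infinite r hr).exists_notMem_finite hB
    by_cases hrB : r ∈ B
    · obtain ⟨z, hz, hrz⟩ := exists_connIn_vertexBoundary hy hrB hyB
      exact ⟨z, hW hz, hrz⟩
    · obtain ⟨x, hx, hxr⟩ := hP.adj r hr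
      exact ⟨r, hW ⟨hrB, x, hUB hx, hxr.symm⟩, ConnIn.refl G _ r⟩
  choose! exit hexitW hexit using hexit
  refine Finset.card_le_card_of_injOn exit hexitW fun r hr s hs hrs => of_not_not fun hne => ?_
  exact hP.separated hr hs hne ((hexit r hr).trans (hrs ▸ (hexit s hs).symm))

theorem card_trifurcations_le {ι : Type*} (J : Finset ι) {D : ι → Set V} {w : ι → Fin 3 → V}
    {W : Finset V} (hT : ∀ j ∈ J, IsTrifurcation G S (D j) (w j))
    (hdisj : (J : Set ι).PairwiseDisjoint D) (hB : B.Finite) (hDB : ∀ j ∈ J, D j ⊆ B)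
    (hW : vertexBoundary G B ⊆ W) : J.card ≤ W.card := by
  obtain ⟨P, hP, hcard⟩ := exists_isEndFamily_iUnion J hT hdisj
  exact hcard.trans (hP.card_le hB (Set.iUnion₂_subset hDB) hW)

end Trifurcation

/-! ### Measurability of connectivity events -/

section Measurability

variable {V : Type*} {G : SimpleGraph V} {D : Set V} {x y : V}

theorem connIn_iff_exists_finset {S : Set V} :
    ConnIn G S x y ↔ ∃ T : Finset V, (∀ v ∈ T, v ∈ S) ∧ ConnIn G (T : Set V) x y := by
  classical
  refine ⟨fun h => ?_, fun ⟨T, hTS, hT⟩ => hT.mono hTS⟩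
  induction h with
  | refl => exact ⟨∅, by simp, ConnIn.refl G _ x⟩
  | @tail y z _ hyz ih =>
    obtain ⟨T, hTS, hT⟩ := ih
    refine ⟨insert y (insert z T), by simpa [hyz.2.1, hyz.2.2] using hTS, ?_⟩
    exact (hT.mono fun v hv => by simp_all).trans (.of_adj hyz.1 (by simp) (by simp))

theorem isTrifurcation_iff {S : Set V} {w : Fin 3 → V} : IsTrifurcation G S D w ↔
    (∀ v ∈ D, v ∈ S) ∧ IsPreconnIn G D ∧ (∀ i, ∃ x ∈ D, G.Adj x (w i)) ∧
      (∀ i, (compIn G (S \ D) (w i)).Infinite) ∧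
      ∀ i j, i ≠ j → ¬ ConnIn G (S \ D) (w i) (w j) :=
  ⟨fun ⟨h₁, h₂, h₃, h₄, h₅⟩ => ⟨fun _ hv => h₁ hv, h₂, h₃, h₄, fun _ _ hij => h₅ hij⟩,
    fun ⟨h₁, h₂, h₃, h₄, h₅⟩ => ⟨h₁, h₂, h₃, h₄, fun i j hij => h₅ i j hij⟩⟩

variable [Countable V] {Ω : Type*} [MeasurableSpace Ω] {S : Ω → Set V}

theorem measurable_connIn (hS : Measurable S) (x y : V) :
    Measurable fun ω => ConnIn G (S ω) x y := by
  have h : (fun ω => ConnIn G (S ω) x y) =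
      fun ω => ∃ T : Finset V, (∀ v ∈ T, v ∈ S ω) ∧ ConnIn G (T : Set V) x y :=
    funext fun _ => propext connIn_iff_exists_finset
  rw [h]
  exact .exists fun T => .and
    (.forall fun v => .imp measurable_const (measurable_set_iff.1 hS v)) measurable_const

theorem measurable_infinite_compIn (hS : Measurable S) (x : V) :
    Measurable fun ω => (compIn G (S ω) x).Infinite := by
  have hinf : ∀ C : Set V, C.Infinite ↔ ∀ T : Finset V, ∃ y, y ∈ C ∧ y ∉ T := fun C =>
    ⟨fun hC T => hC.exists_notMem_finset T, fun hC hfin =>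
      let ⟨_, hy, hyT⟩ := hC hfin.toFinset; hyT (hfin.mem_toFinset.2 hy)⟩
  simp only [hinf]
  exact .forall fun T => .exists fun y => .and (measurable_connIn hS x y) measurable_const

theorem measurable_hasTwoInfiniteComps (hS : Measurable S) :
    Measurable fun ω => HasTwoInfiniteComps G (S ω) :=
  .exists fun x => .exists fun y => .and (measurable_infinite_compIn hS x)
    (.and (measurable_infinite_compIn hS y) (.not (measurable_connIn hS x y)))

theorem measurable_isTrifurcation (hS : Measurable S) (D : Set V) (w : Fin 3 → V) :
    Measurable fun ω => IsTrifurcation G (S ω) D w := by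
  have hSv := measurable_set_iff.1 hS
  have hdiff : Measurable fun ω => S ω \ D :=
    measurable_set_iff.2 fun v => .and (hSv v) measurable_const
  simp only [isTrifurcation_iff]
  exact .and (.forall fun v => .imp measurable_const (hSv v)) <|
    .and measurable_const <| .and measurable_const <|
    .and (.forall fun i => measurable_infinite_compIn hdiff (w i)) <|
    .forall fun i => .forall fun j =>
      .imp measurable_const (.not (measurable_connIn hdiff (w i) (w j)))

end Measurability

/-! ### The hexagonal lattice and its symmetries -/

/-- The hexagonal lattice as a simple graph. -/
def hexGraph : SimpleGraph HexV where
  Adj := HexAdj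
  symm := ⟨fun _ _ h => ⟨h.1.symm, h.2.imp fun _ he => he.symm⟩⟩
  loopless := ⟨fun _ h => h.1 rfl⟩

/-- The neighbour of `v` across the edge `edgesAt v i`. -/
def nbr (v : HexV) (i : Fin 3) : HexV :=
  if v.2.2 then end2 (edgesAt v i) else end1 (edgesAt v i)

theorem nbr_true (x y : ℤ) :
    nbr (x, y, true) = ![(x, y, false), (x + 1, y, false), (x, y + 1, false)] := by
  funext i
  fin_cases i <;> rfl

theorem nbr_false (x y : ℤ) :
    nbr (x, y, false) = ![(x, y, true), (x - 1, y, true), (x, y - 1, true)] := by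
  funext i
  fin_cases i <;> rfl

@[simp] theorem edgesAt_type (v : HexV) (i : Fin 3) : (edgesAt v i).2.2 = i := by
  obtain ⟨x, y, t⟩ := v
  cases t <;> fin_cases i <;> rfl

theorem end_edgesAt (v : HexV) (i : Fin 3) :
    end1 (edgesAt v i) = (if v.2.2 then v else nbr v i) ∧
      end2 (edgesAt v i) = (if v.2.2 then nbr v i else v) := by
  obtain ⟨x, y, t⟩ := v
  cases t <;> fin_cases i <;> simp [edgesAt, nbr, end1, end2]

theorem exists_edgesAt_iff {e : HexE} {v : HexV} :
    (∃ i, edgesAt v i = e) ↔ v = end1 e ∨ v = end2 e := by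
  constructor
  · rintro ⟨i, rfl⟩
    rcases v with ⟨x, y, _ | _⟩ <;> simp [end_edgesAt]
  · obtain ⟨x, y, k⟩ := e
    rintro (rfl | rfl)
    · exact ⟨k, rfl⟩
    · refine ⟨k, ?_⟩
      fin_cases k <;> simp [edgesAt, end2]

theorem edgesAt_nbr (v : HexV) (i : Fin 3) : edgesAt (nbr v i) i = edgesAt v i := by
  obtain ⟨x, y, t⟩ := v
  cases t <;> fin_cases i <;> simp [edgesAt, nbr, end1, end2]

theorem nbr_type (v : HexV) (i : Fin 3) : (nbr v i).2.2 = !v.2.2 := by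
  obtain ⟨x, y, t⟩ := v
  cases t <;> fin_cases i <;> rfl

theorem hexAdj_nbr (v : HexV) (i : Fin 3) : hexGraph.Adj v (nbr v i) := by
  refine ⟨fun h => ?_, edgesAt v i, ?_⟩
  · have := nbr_type v i
    rw [← h] at this
    exact Bool.eq_not_self _ |>.1 this
  · cases h : v.2.2 <;> simp [end_edgesAt, h]

theorem hexAdj_iff {v w : HexV} : hexGraph.Adj v w ↔ ∃ i, w = nbr v i := by
  refine ⟨fun ⟨hne, e, hv, hw⟩ => ?_, fun ⟨i, hi⟩ => hi ▸ hexAdj_nbr v i⟩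
  obtain ⟨i, rfl⟩ := exists_edgesAt_iff.2 hv
  rw [(end_edgesAt v i).1, (end_edgesAt v i).2] at hw
  split_ifs at hw
  exacts [⟨i, hw.resolve_left hne.symm⟩, ⟨i, hw.resolve_right hne.symm⟩]

theorem hexGraph_neighborSet_finite (v : HexV) : (hexGraph.neighborSet v).Finite :=
  (Set.finite_range (nbr v)).subset fun _ hw =>
    let ⟨i, hi⟩ := hexAdj_iff.1 hw; ⟨i, hi.symm⟩

theorem exists_false_true_mem_of_infinite {S : Set HexV} {u : HexV}
    (hinf : (compIn hexGraph S u).Infinite) :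
    ∃ v₁ ∈ S, ∃ v₂ ∈ S, v₁.2.2 = false ∧ v₂.2.2 = true := by
  obtain ⟨y, hy, hne⟩ := hinf.exists_notMem_finite (Set.finite_singleton u)
  rcases Relation.ReflTransGen.cases_head hy with rfl | ⟨z, ⟨hadj, hu, hz⟩, -⟩
  · exact absurd rfl hne
  · obtain ⟨i, rfl⟩ := hexAdj_iff.1 hadj
    have htype := nbr_type u i
    cases h : u.2.2 <;> rw [h] at htype
    exacts [⟨u, hu, _, hz, h, htype⟩, ⟨_, hz, u, hu, htype, h⟩]

section Symmetry

/-- A bijection of the vertices that permutes the three edge types is a lattice automorphism. -/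
def hexIso (φ : HexV ≃ HexV) (π : Equiv.Perm (Fin 3)) (h : ∀ v i, φ (nbr v i) = nbr (φ v) (π i)) :
    hexGraph ≃g hexGraph where
  toEquiv := φ
  map_rel_iff' {v w} := by
    simp only [hexAdj_iff, ← π.exists_congr_right (q := fun j => φ w = nbr (φ v) j), ← h,
      φ.injective.eq_iff]

theorem hexIso_nbr {φ : HexV ≃ HexV} {π : Equiv.Perm (Fin 3)}
    (h : ∀ v i, φ (nbr v i) = nbr (φ v) (π i)) (v : HexV) (i : Fin 3) :
    hexIso φ π h (nbr v i) = nbr (hexIso φ π h v) (π i) :=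
  h v i

/-- Translation of the lattice by `g`. -/
def shiftV (g : ℤ × ℤ) : hexGraph ≃g hexGraph :=
  hexIso
    { toFun := fun v => (v.1 + g.1, v.2.1 + g.2, v.2.2)
      invFun := fun v => (v.1 - g.1, v.2.1 - g.2, v.2.2)
      left_inv := fun v => by simp
      right_inv := fun v => by simp } 1 <| by
    rintro ⟨x, y, t⟩ i
    cases t <;> fin_cases i <;> simp [nbr_true, nbr_false] <;> ring

theorem shiftV_apply (g : ℤ × ℤ) (v : HexV) : shiftV g v = (v.1 + g.1, v.2.1 + g.2, v.2.2) :=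
  rfl

theorem edgesAt_shiftV (g : ℤ × ℤ) (v : HexV) (i : Fin 3) :
    edgesAt (shiftV g v) i = shiftE g (edgesAt v i) := by
  obtain ⟨x, y, t⟩ := v
  cases t <;> fin_cases i <;> simp [edgesAt, shiftE, shiftV_apply] <;> ring

theorem localConf_shiftConfig (g : ℤ × ℤ) (ω : Config) (v : HexV) :
    localConf (shiftConfig g ω) v = localConf ω (shiftV g v) :=
  funext fun i => by simp only [localConf, shiftConfig, edgesAt_shiftV]

theorem confSet_shiftConfig (g : ℤ × ℤ) (ω : Config) (τ : Fin 3 → Bool) :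
    confSet (shiftConfig g ω) τ = shiftV g ⁻¹' confSet ω τ :=
  Set.ext fun v => by simp [confSet, localConf_shiftConfig]

theorem shiftConfig_iterate (g : ℤ × ℤ) (m : ℕ) (ω : Config) :
    (shiftConfig g)^[m] ω = shiftConfig (m • g) ω := by
  induction m with
  | zero => funext e; simp [shiftConfig, shiftE]
  | succ m ih =>
    rw [Function.iterate_succ_apply', ih]
    funext e
    simp only [shiftConfig, shiftE, succ_nsmul', Prod.fst_add, Prod.snd_add, ← add_assoc]

/-- Rotation of the lattice by 120° about the centre of a hexagon; it permutes the edge types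
a → b → c → a. -/
def rotV : hexGraph ≃g hexGraph :=
  hexIso
    { toFun := fun v => (if v.2.2 then -v.1 - v.2.1 else 1 - v.1 - v.2.1, v.1, v.2.2)
      invFun := fun v => (v.2.1, if v.2.2 then -v.1 - v.2.1 else 1 - v.1 - v.2.1, v.2.2)
      left_inv := fun ⟨x, y, t⟩ => by (cases t <;> simp); ring
      right_inv := fun ⟨x, y, t⟩ => by (cases t <;> simp); ring } (Equiv.addRight 1) <| by
    rintro ⟨x, y, t⟩ i
    cases t <;> fin_cases i <;> simp [nbr_true, nbr_false] <;> ring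

theorem rotV_nbr (v : HexV) (i : Fin 3) : rotV (nbr v i) = nbr (rotV v) (i + 1) :=
  hexIso_nbr _ v i

/-- The linear part of `rotV`, acting on translation vectors. -/
def rotL : ℤ × ℤ →+ ℤ × ℤ where
  toFun g := (-g.1 - g.2, g.1)
  map_zero' := rfl
  map_add' g h := by ext <;> simp; ring

theorem rotV_shiftV (g : ℤ × ℤ) (v : HexV) : rotV (shiftV g v) = shiftV (rotL g) (rotV v) := by
  obtain ⟨x, y, t⟩ := v
  cases t <;> simp [rotV, hexIso, shiftV, rotL] <;> ring

end Symmetry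

theorem measurable_shiftConfig (g : ℤ × ℤ) : Measurable (shiftConfig g) :=
  measurable_pi_iff.2 fun e => measurable_pi_apply (shiftE g e)

theorem measurable_localConf (v : HexV) : Measurable fun ω => localConf ω v :=
  measurable_pi_iff.2 fun i => measurable_pi_apply (edgesAt v i)

theorem measurable_confSet (τ : Fin 3 → Bool) : Measurable fun ω => confSet ω τ :=
  measurable_set_iff.2 fun v =>
    measurableSet_setOfPred.1 (measurable_localConf v (measurableSet_singleton τ))

/-! ### Boxes -/

theorem finite_box (n : ℕ) (i j : ℤ) : (box n i j).Finite := by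
  refine ((Finset.Icc (i - n) (i + n)) ×ˢ
    ((Finset.Icc (j - n) (j + n)) ×ˢ (Finset.univ : Finset Bool))).finite_toSet.subset ?_
  rintro ⟨x, y, t⟩ ⟨h₁, h₂⟩
  simp only [abs_le] at h₁ h₂
  simp only [Finset.coe_product, Finset.coe_Icc, Finset.coe_univ, Set.mem_prod, Set.mem_Icc,
    Set.mem_univ, and_true]
  omega

theorem exists_subset_box (R : Finset HexV) : ∃ M, (R : Set HexV) ⊆ box M 0 0 := by
  refine ⟨∑ v ∈ R, (v.1.natAbs + v.2.1.natAbs), fun v hv => ?_⟩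
  have := R.single_le_sum (f := fun v => v.1.natAbs + v.2.1.natAbs) (fun _ _ => Nat.zero_le _) hv
  simp only [box, Set.mem_ofPred_eq, abs_le]
  omega

/-- The four sides of the square of side `2 * N`, with both vertices of each cell; it contains the
vertex boundary of the box of radius `N - 1`. -/
noncomputable def frame (N : ℕ) : Finset HexV :=
  (({-(N : ℤ), (N : ℤ)} : Finset ℤ) ×ˢ (Finset.Icc (-(N : ℤ)) N ×ˢ Finset.univ)) ∪
    (Finset.Icc (-(N : ℤ)) N ×ˢ (({-(N : ℤ), (N : ℤ)} : Finset ℤ) ×ˢ Finset.univ))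

theorem card_frame_le (N : ℕ) : (frame N).card ≤ 8 * (2 * N + 1) := by
  have hends : ({-(N : ℤ), (N : ℤ)} : Finset ℤ).card ≤ 2 := Finset.card_le_two
  have hside : (Finset.Icc (-(N : ℤ)) N).card = 2 * N + 1 := by
    rw [Int.card_Icc]; omega
  refine (Finset.card_union_le _ _).trans ?_
  simp only [Finset.card_product, hside, Finset.card_univ, Fintype.card_bool]
  nlinarith

theorem abs_sub_nbr_le (v : HexV) (i : Fin 3) :
    |v.1 - (nbr v i).1| ≤ 1 ∧ |v.2.1 - (nbr v i).2.1| ≤ 1 := by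
  obtain ⟨x, y, t⟩ := v
  cases t <;> fin_cases i <;> simp [nbr_true, nbr_false]

theorem vertexBoundary_box_subset_frame (N : ℕ) :
    vertexBoundary hexGraph (box N 0 0) ⊆ frame (N + 1) := by
  rintro v ⟨hv, w, hw, hvw⟩
  obtain ⟨i, rfl⟩ := hexAdj_iff.1 hvw
  have hi := abs_sub_nbr_le v i
  simp only [box, Set.mem_ofPred_eq, abs_le] at hv hw hi
  simp only [frame, Finset.mem_coe, Finset.mem_union, Finset.mem_product, Finset.mem_insert,
    Finset.mem_singleton, Finset.mem_Icc, Finset.mem_univ, and_true]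
  omega

/-! ### Trifurcations are null events -/

/-- The event that some `D ⊆ R` is a trifurcation of the set of vertices of type `τ`. -/
def trifurcationEvent (τ : Fin 3 → Bool) (R : Finset HexV) : Set Config :=
  {ω | ∃ D ⊆ R, ∃ w, IsTrifurcation hexGraph (confSet ω τ) (D : Set HexV) w}

theorem measurableSet_trifurcationEvent (τ : Fin 3 → Bool) (R : Finset HexV) :
    MeasurableSet (trifurcationEvent τ R) :=
  measurableSet_setOfPred.2 <| .exists fun D => .and measurable_const <|
    .exists fun w => measurable_isTrifurcation (measurable_confSet τ) D w

theorem exists_isTrifurcation_of_mem_preimage_shiftConfig {τ : Fin 3 → Bool} {R : Finset HexV}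
    {g : ℤ × ℤ} {ω : Config} (h : ω ∈ shiftConfig g ⁻¹' trifurcationEvent τ R) :
    ∃ D ⊆ shiftV g '' R, ∃ w, IsTrifurcation hexGraph (confSet ω τ) D w := by
  obtain ⟨D, hDR, w, hw⟩ := h
  refine ⟨shiftV g '' D, Set.image_mono (Finset.coe_subset.2 hDR), shiftV g ∘ w,
    .map (shiftV g) ?_⟩
  rwa [← confSet_shiftConfig, Set.preimage_image_eq _ (shiftV g).injective]

theorem sum_measure_le_of_card_le {Ω ι : Type*} [MeasurableSpace Ω] (μ : Measure Ω)
    (I : Finset ι) {A : ι → Set Ω} (hA : ∀ i, MeasurableSet (A i)) (C : ℕ)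
    (hC : ∀ ω, ∀ J ⊆ I, (∀ i ∈ J, ω ∈ A i) → J.card ≤ C) :
    ∑ i ∈ I, μ (A i) ≤ C * μ Set.univ := by
  classical
  calc ∑ i ∈ I, μ (A i) = ∫⁻ ω, ∑ i ∈ I, (A i).indicator 1 ω ∂μ := by
        rw [lintegral_finsetSum _ fun i _ => measurable_one.indicator (hA i)]
        simp only [lintegral_indicator_one (hA _)]
    _ ≤ ∫⁻ _, C ∂μ := by
        refine lintegral_mono fun ω => ?_
        simp only [Set.indicator_apply, Pi.one_apply, Finset.sum_boole]
        exact_mod_cast hC ω _ (Finset.filter_subset _ _) fun i hi => (Finset.mem_filter.1 hi).2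
    _ = C * μ Set.univ := lintegral_const _

theorem eq_zero_of_forall_sq_mul_le {t C : ENNReal} (hC : C ≠ ⊤)
    (h : ∀ n : ℕ, (n : ENNReal) ^ 2 * t ≤ C * (n + 1)) : t = 0 := by
  by_contra ht
  obtain ⟨n, hn⟩ := ENNReal.exists_nat_mul_gt ht (b := 2 * C) (by finiteness)
  have hgt : 2 * C < (n + 1 : ℕ) * t := hn.trans_le (by gcongr; simp)
  refine (h (n + 1)).not_gt ?_
  calc C * ((n + 1 : ℕ) + 1) ≤ C * (2 * (n + 1 : ℕ)) := by
        gcongr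
        norm_cast
        omega
    _ = (n + 1 : ℕ) * (2 * C) := by ring
    _ < (n + 1 : ℕ) * ((n + 1 : ℕ) * t) := ENNReal.mul_lt_mul_right (by simp) (by simp) hgt
    _ = ((n + 1 : ℕ) : ENNReal) ^ 2 * t := by ring

/-- The translation vectors `(k * p₁, k * p₂)`, which tile the plane by cells of side `k`. -/
def gridVec (k : ℕ) (p : ℕ × ℕ) : ℤ × ℤ := (k * p.1, k * p.2)

theorem pairwise_disjoint_shiftV_gridVec {R : Set HexV} {M : ℕ} (hR : R ⊆ box M 0 0) :
    Pairwise fun p q =>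
      Disjoint (shiftV (gridVec (2 * M + 1) p) '' R) (shiftV (gridVec (2 * M + 1) q) '' R) := by
  refine fun p q hpq => Set.disjoint_left.2 ?_
  rintro _ ⟨v, hv, rfl⟩ ⟨w, hw, hvw⟩
  have hv := hR hv
  have hw := hR hw
  simp only [shiftV_apply, gridVec, Prod.mk.injEq] at hvw
  simp only [box, Set.mem_ofPred_eq, sub_zero, abs_le] at hv hw
  have hcoord : ∀ {a b : ℕ} {x y : ℤ}, -(M : ℤ) ≤ x ∧ x ≤ M → -(M : ℤ) ≤ y ∧ y ≤ M →
      y + (2 * M + 1 : ℕ) * b = x + (2 * M + 1 : ℕ) * a → a = b := by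
    intro a b x y hx hy h
    have hxy : x - y = (2 * M + 1 : ℕ) * ((b : ℤ) - a) := by linarith
    have := Int.eq_zero_of_abs_lt_dvd ⟨_, hxy⟩ (abs_lt.2 ⟨by omega, by omega⟩)
    rw [this, eq_comm, mul_eq_zero] at hxy
    omega
  exact hpq (Prod.ext (hcoord hv.1 hw.1 hvw.1) (hcoord hv.2 hw.2 hvw.2.1))

theorem shiftV_gridVec_image_subset_box {R : Set HexV} {M n : ℕ} (hR : R ⊆ box M 0 0) {p : ℕ × ℕ}
    (hp : p ∈ Finset.range n ×ˢ Finset.range n) :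
    shiftV (gridVec (2 * M + 1) p) '' R ⊆ box (M + (2 * M + 1) * n) 0 0 := by
  rintro _ ⟨v, hv, rfl⟩
  have hv := hR hv
  simp only [Finset.mem_product, Finset.mem_range] at hp
  simp only [box, Set.mem_ofPred_eq, sub_zero, abs_le, shiftV_apply, gridVec] at hv ⊢
  have hp₁ : (2 * M + 1) * p.1 ≤ (2 * M + 1) * n := Nat.mul_le_mul_left _ hp.1.le
  have hp₂ : (2 * M + 1) * p.2 ≤ (2 * M + 1) * n := Nat.mul_le_mul_left _ hp.2.le
  zify at hp₁ hp₂ ⊢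
  have : 0 ≤ (2 * (M : ℤ) + 1) * p.1 := by positivity
  have : 0 ≤ (2 * (M : ℤ) + 1) * p.2 := by positivity
  omega

-- The n² disjoint translates are equally likely to contain a trifurcation, but at most O(n) of
-- them can: that is the size of the frame enclosing them all.
theorem measure_trifurcationEvent_eq_zero {μ : Measure Config} [IsFiniteMeasure μ]
    (hμ : TransInvariant μ) (τ : Fin 3 → Bool) (R : Finset HexV) :
    μ (trifurcationEvent τ R) = 0 := by
  obtain ⟨M, hM⟩ := exists_subset_box R
  have hmeas := measurableSet_trifurcationEvent τ R
  let A (p : ℕ × ℕ) := shiftConfig (gridVec (2 * M + 1) p) ⁻¹' trifurcationEvent τ R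
  have hA (p : ℕ × ℕ) : μ (A p) = μ (trifurcationEvent τ R) := by
    rw [← Measure.map_apply (measurable_shiftConfig _) hmeas, hμ]
  have hC : ((8 * (4 * M + 3) : ℕ) : ENNReal) * μ Set.univ ≠ ⊤ :=
    ENNReal.mul_ne_top (ENNReal.natCast_ne_top _) (measure_ne_top _ _)
  refine eq_zero_of_forall_sq_mul_le hC fun n => ?_
  have hcount (ω : Config) (J : Finset (ℕ × ℕ)) (hJ : J ⊆ Finset.range n ×ˢ Finset.range n)
      (hω : ∀ p ∈ J, ω ∈ A p) : J.card ≤ 8 * (4 * M + 3) * (n + 1) := by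
    choose! D hD w hw using
      fun p hp => exists_isTrifurcation_of_mem_preimage_shiftConfig (hω p hp)
    refine (card_trifurcations_le J hw ?_ (finite_box (M + (2 * M + 1) * n) 0 0)
      (fun p hp => (hD p hp).trans (shiftV_gridVec_image_subset_box hM (hJ hp)))
      (vertexBoundary_box_subset_frame _)).trans ((card_frame_le _).trans (by nlinarith))
    exact fun p hp q hq hpq =>
      (pairwise_disjoint_shiftV_gridVec hM hpq).mono (hD p hp) (hD q hq)
  have := sum_measure_le_of_card_le μ (Finset.range n ×ˢ Finset.range n)
    (fun p => measurable_shiftConfig _ hmeas) _ hcount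
  simpa [A, hA, pow_two, mul_right_comm] using this

/-! ### Gibbs measures tolerate finite modifications -/

section Gibbs

variable {F F' : Finset HexE} {σ σ' η ξ ω : Config}

theorem mem_verts_iff {v : HexV} : v ∈ verts F ↔ ∃ i, edgesAt v i ∈ F := by
  simp only [verts, endsFinset, Finset.mem_biUnion, Finset.mem_insert, Finset.mem_singleton,
    ← exists_edgesAt_iff]
  exact ⟨fun ⟨_, he, i, hi⟩ => ⟨i, hi ▸ he⟩, fun ⟨i, hi⟩ => ⟨_, hi, i, rfl⟩⟩

theorem mem_edgeNbhd_iff {e : HexE} : e ∈ edgeNbhd F ↔ ∃ v ∈ verts F, ∃ i, edgesAt v i = e := by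
  simp only [edgeNbhd, verts, endsFinset, exists_edgesAt_iff, Set.mem_ofPred_eq,
    Finset.mem_biUnion, Finset.mem_insert, Finset.mem_singleton]
  constructor
  · rintro ⟨e', he', h | h | h | h⟩
    exacts [⟨_, ⟨e', he', .inl rfl⟩, .inl h⟩, ⟨_, ⟨e', he', .inl rfl⟩, .inr h⟩,
      ⟨_, ⟨e', he', .inr rfl⟩, .inl h⟩, ⟨_, ⟨e', he', .inr rfl⟩, .inr h⟩]
  · rintro ⟨_, ⟨e', he', rfl | rfl⟩, h⟩
    exacts [⟨e', he', h.imp_right .inl⟩, ⟨e', he', .inr (.inr h)⟩]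

theorem edgesAt_mem_edgeNbhd {v : HexV} (hv : v ∈ verts F) (i : Fin 3) :
    edgesAt v i ∈ edgeNbhd F :=
  mem_edgeNbhd_iff.2 ⟨v, hv, i, rfl⟩

theorem coe_subset_edgeNbhd (F : Finset HexE) : (F : Set HexE) ⊆ edgeNbhd F :=
  fun e he => ⟨e, he, Or.inl rfl⟩

theorem edgeNbhd_mono (h : F ⊆ F') : edgeNbhd F ⊆ edgeNbhd F' :=
  fun _ ⟨e, he, h'⟩ => ⟨e, h he, h'⟩

theorem verts_mono (h : F ⊆ F') : verts F ⊆ verts F' :=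
  Finset.biUnion_subset_biUnion_of_subset_left _ h

theorem edgeNbhd_union (F F' : Finset HexE) : edgeNbhd (F ∪ F') = edgeNbhd F ∪ edgeNbhd F' := by
  ext e
  simp only [edgeNbhd, Finset.mem_union, or_and_right, exists_or, Set.mem_ofPred_eq, Set.mem_union]

theorem finite_edgeNbhd (F : Finset HexE) : (edgeNbhd F).Finite := by
  have h : edgeNbhd F = ⋃ v ∈ verts F, Set.range (edgesAt v) := by
    ext e
    simp [mem_edgeNbhd_iff]
  rw [h]
  exact (verts F).finite_toSet.biUnion fun v _ => Set.finite_range _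

/-- The configuration that agrees with `σ` on `F` and with `η` elsewhere. -/
def replaceOn (F : Finset HexE) (σ η : Config) : Config := F.piecewise σ η

theorem replaceOn_of_mem {e : HexE} (he : e ∈ F) : replaceOn F σ η e = σ e :=
  Finset.piecewise_eq_of_mem _ _ _ he

theorem replaceOn_of_notMem {e : HexE} (he : e ∉ F) : replaceOn F σ η e = η e :=
  Finset.piecewise_eq_of_notMem _ _ _ he

theorem measurable_replaceOn (F : Finset HexE) (σ : Config) : Measurable (replaceOn F σ) := by
  refine measurable_pi_iff.2 fun e => ?_
  by_cases he : e ∈ F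
  · simp only [replaceOn_of_mem he, measurable_const]
  · simpa only [replaceOn_of_notMem he] using measurable_pi_apply e

theorem measurableSet_cyl (S : Set HexE) (σ : Config) : MeasurableSet (cyl S σ) := by
  have h : cyl S σ = ⋂ e ∈ S, (fun ω : Config => ω e) ⁻¹' {σ e} := by ext; simp [cyl]
  rw [h]
  exact .biInter S.to_countable fun e _ => measurable_pi_apply e (measurableSet_singleton _)

theorem cyl_inter_cyl {S T : Set HexE} (h : η ∈ cyl S σ ∩ cyl T ξ) :
    cyl S σ ∩ cyl T ξ = cyl (S ∪ T) η := by
  ext ω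
  simp only [cyl, Set.mem_inter_iff, Set.mem_ofPred_eq, Set.mem_union, or_imp, forall_and] at h ⊢
  exact and_congr (forall₂_congr fun e he => by rw [h.1 e he])
    (forall₂_congr fun e he => by rw [h.2 e he])

/-- The cylinder events that fix the edges near a finite set containing `F`; a Gibbs measure is
known on these. -/
def cylsAround (F : Finset HexE) : Set (Set Config) :=
  {s | ∃ F' ρ, F ⊆ F' ∧ s = cyl (edgeNbhd F') ρ}

theorem isPiSystem_cylsAround (F : Finset HexE) : IsPiSystem (cylsAround F) := by
  rintro _ ⟨F₁, ρ₁, h₁, rfl⟩ _ ⟨F₂, ρ₂, -, rfl⟩ ⟨η, hη⟩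
  refine ⟨F₁ ∪ F₂, η, h₁.trans Finset.subset_union_left, ?_⟩
  rw [edgeNbhd_union, cyl_inter_cyl hη]

theorem generateFrom_cylsAround (F : Finset HexE) :
    (MeasurableSpace.pi : MeasurableSpace Config) =
      MeasurableSpace.generateFrom (cylsAround F) := by
  refine le_antisymm (iSup_le fun e => ?_) (MeasurableSpace.generateFrom_le ?_)
  · have := (finite_edgeNbhd (insert e F)).to_subtype
    have he : e ∈ edgeNbhd (insert e F) := coe_subset_edgeNbhd _ (Finset.mem_insert_self e F)
    have hrestrict : Measurable[MeasurableSpace.generateFrom (cylsAround F)]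
        ((edgeNbhd (insert e F)).domRestrict : Config → edgeNbhd (insert e F) → Bool) := by
      refine @measurable_to_countable _ _ _ _ (.generateFrom (cylsAround F)) _ fun ω => ?_
      refine MeasurableSpace.measurableSet_generateFrom
        ⟨insert e F, ω, Finset.subset_insert e F, ?_⟩
      ext ω'
      simp [cyl, funext_iff]
    exact ((measurable_pi_apply (⟨e, he⟩ : edgeNbhd (insert e F))).comp hrestrict).comap_le
  · rintro _ ⟨F', ρ, -, rfl⟩
    exact measurableSet_cyl _ _

theorem localConf_eq_of_mem_cyl (h : ω ∈ cyl (edgeNbhd F) σ) {v : HexV} (hv : v ∈ verts F) :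
    localConf ω v = localConf σ v :=
  funext fun i => h _ (edgesAt_mem_edgeNbhd hv i)

theorem localConf_eq_of_notMem_verts (h : ∀ e ∉ F, ω e = σ e) {v : HexV} (hv : v ∉ verts F) :
    localConf ω v = localConf σ v :=
  funext fun i => h _ fun he => hv (mem_verts_iff.2 ⟨i, he⟩)

theorem replaceOn_mem_cyl (h : ∀ e ∈ edgeNbhd F, e ∉ F → σ e = η e) :
    replaceOn F σ η ∈ cyl (edgeNbhd F) σ := fun e he => by
  by_cases heF : e ∈ F
  · exact replaceOn_of_mem heF
  · rw [replaceOn_of_notMem heF, h e he heF]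

theorem cyl_inter_preimage_replaceOn (hF : F ⊆ F') {ρ : Config}
    (hη : η ∈ cyl (edgeNbhd F) σ' ∩ cyl (edgeNbhd F') ρ) (hoff : ∀ e ∉ F, σ e = σ' e) :
    cyl (edgeNbhd F) σ ∩ replaceOn F σ' ⁻¹' cyl (edgeNbhd F') ρ =
      cyl (edgeNbhd F') (replaceOn F σ η) := by
  have hση : ∀ e ∈ edgeNbhd F, e ∉ F → σ e = η e := fun e he heF => by
    rw [hoff e heF, hη.1 e he]
  have hFN := coe_subset_edgeNbhd F
  ext ω
  constructor
  · rintro ⟨hωσ, hωρ⟩ e he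
    by_cases heF : e ∈ F
    · rw [replaceOn_of_mem heF, hωσ e (hFN heF)]
    · have := hωρ e he
      rw [replaceOn_of_notMem heF] at this ⊢
      rw [this, hη.2 e he]
  · intro hω
    refine ⟨fun e he => (hω e (edgeNbhd_mono hF he)).trans (replaceOn_mem_cyl hση e he),
      fun e he => ?_⟩
    by_cases heF : e ∈ F
    · rw [replaceOn_of_mem heF, ← hη.1 e (hFN heF), hη.2 e he]
    · rw [replaceOn_of_notMem heF, hω e he, replaceOn_of_notMem heF, hη.2 e he]

theorem IsConfig.replaceOn (hσ : IsConfig σ) (hη : IsConfig η)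
    (h : ∀ e ∈ edgeNbhd F, e ∉ F → σ e = η e) : IsConfig (replaceOn F σ η) := by
  intro v
  by_cases hv : v ∈ verts F
  · rw [localConf_eq_of_mem_cyl (replaceOn_mem_cyl h) hv]
    exact hσ v
  · rw [localConf_eq_of_notMem_verts (fun e he => replaceOn_of_notMem he) hv]
    exact hη v

theorem measurableSet_isConfig : MeasurableSet {ω | IsConfig ω} :=
  measurableSet_setOfPred.2 <| .forall fun v =>
    (measurable_of_countable fun f : Fin 3 → Bool =>
      1 ≤ (Finset.univ.filter fun i => f i = true).card ∧
        (Finset.univ.filter fun i => f i = true).card ≤ 2).comp (measurable_localConf v)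

theorem IsConfig.weight_pos {a b c : ℝ} (ha : 0 < a) (hb : 0 < b) (hc : 0 < c) (hσ : IsConfig σ)
    (v : HexV) : 0 < weight a b c (localConf σ v) := by
  have h := hσ v
  rw [Finset.card_filter, Fin.sum_univ_three] at h
  unfold weight
  rcases h₂ : localConf σ v 2 <;> rcases h₁ : localConf σ v 1 <;>
    rcases h₀ : localConf σ v 0 <;> simp_all

/-- The Gibbs weight of `σ` in the window `F`: the product of the local weights at all vertices
incident to `F`. -/
noncomputable def gibbsWeight (a b c : ℝ) (F : Finset HexE) (σ : Config) : ENNReal :=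
  ENNReal.ofReal (∏ v ∈ verts F, weight a b c (localConf σ v))

variable {a b c : ℝ}

theorem gibbsWeight_ne_top : gibbsWeight a b c F σ ≠ ⊤ := ENNReal.ofReal_ne_top

theorem gibbsWeight_congr (h : ω ∈ cyl (edgeNbhd F) σ) :
    gibbsWeight a b c F ω = gibbsWeight a b c F σ := by
  rw [gibbsWeight, gibbsWeight,
    Finset.prod_congr rfl fun v hv => by rw [localConf_eq_of_mem_cyl h hv]]

theorem gibbsWeight_ne_zero (ha : 0 < a) (hb : 0 < b) (hc : 0 < c) (hσ : IsConfig σ) :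
    gibbsWeight a b c F σ ≠ 0 :=
  ENNReal.ofReal_ne_zero_iff.2 <| Finset.prod_pos fun v _ => hσ.weight_pos ha hb hc v

theorem gibbsWeight_eq_mul_of_subset (ha : 0 < a) (hb : 0 < b) (hc : 0 < c) (hF : F ⊆ F')
    (hσ : IsConfig σ) : gibbsWeight a b c F' σ = gibbsWeight a b c F σ *
      ENNReal.ofReal (∏ v ∈ verts F' \ verts F, weight a b c (localConf σ v)) := by
  rw [gibbsWeight, gibbsWeight, mul_comm, ← ENNReal.ofReal_mul
    (Finset.prod_nonneg fun v _ => (hσ.weight_pos ha hb hc v).le),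
    Finset.prod_sdiff (verts_mono hF)]

namespace IsGibbs

variable {μ : Measure Config}

theorem ae_isConfig (hG : IsGibbs a b c μ) : ∀ᵐ ω ∂μ, IsConfig ω :=
  have := hG.1
  (mem_ae_iff_prob_eq_one measurableSet_isConfig).2 hG.2.1

-- The local weights away from `F` are common to `ξ` and `η` and cancel.
theorem gibbsWeight_mul_cyl (ha : 0 < a) (hb : 0 < b) (hc : 0 < c) (hG : IsGibbs a b c μ)
    (hF : F ⊆ F') (hξ : IsConfig ξ) (hη : IsConfig η) (hoff : ∀ e ∉ F, ξ e = η e) :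
    gibbsWeight a b c F η * μ (cyl (edgeNbhd F') ξ) =
      gibbsWeight a b c F ξ * μ (cyl (edgeNbhd F') η) := by
  have hF' := hG.2.2 F' ξ η hξ hη fun e he => hoff e fun heF => he (hF heF)
  rw [Set.union_eq_self_of_subset_left (coe_subset_edgeNbhd F')] at hF'
  change _ * gibbsWeight a b c F' η = _ * gibbsWeight a b c F' ξ at hF'
  have hrest : ∏ v ∈ verts F' \ verts F, weight a b c (localConf ξ v) =
      ∏ v ∈ verts F' \ verts F, weight a b c (localConf η v) :=
    Finset.prod_congr rfl fun v hv => by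
      rw [localConf_eq_of_notMem_verts hoff (Finset.mem_sdiff.1 hv).2]
  rw [gibbsWeight_eq_mul_of_subset ha hb hc hF hξ, gibbsWeight_eq_mul_of_subset ha hb hc hF hη,
    hrest, ← mul_assoc, ← mul_assoc] at hF'
  have hpos : 0 < ∏ v ∈ verts F' \ verts F, weight a b c (localConf η v) :=
    Finset.prod_pos fun v _ => hη.weight_pos ha hb hc v
  have := (ENNReal.mul_left_inj (ENNReal.ofReal_ne_zero_iff.2 hpos) ENNReal.ofReal_ne_top).1 hF'
  rw [mul_comm, this, mul_comm]

theorem gibbsWeight_mul_inter_of_mem_cylsAround (ha : 0 < a) (hb : 0 < b) (hc : 0 < c)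
    (hG : IsGibbs a b c μ) (hσ : IsConfig σ) (hσ' : IsConfig σ') (hoff : ∀ e ∉ F, σ e = σ' e)
    {X : Set Config} (hX : X ∈ cylsAround F) :
    gibbsWeight a b c F σ' * μ (cyl (edgeNbhd F) σ ∩ replaceOn F σ' ⁻¹' X) =
      gibbsWeight a b c F σ * μ (cyl (edgeNbhd F) σ' ∩ X) := by
  obtain ⟨F', ρ, hF, rfl⟩ := hX
  by_cases hex : ∃ η, IsConfig η ∧ η ∈ cyl (edgeNbhd F) σ' ∩ cyl (edgeNbhd F') ρ
  · obtain ⟨η, hη, hηρ⟩ := hex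
    have hση : ∀ e ∈ edgeNbhd F, e ∉ F → σ e = η e := fun e he heF => by
      rw [hoff e heF, hηρ.1 e he]
    rw [cyl_inter_preimage_replaceOn hF hηρ hoff, cyl_inter_cyl hηρ,
      Set.union_eq_self_of_subset_left (edgeNbhd_mono hF), ← gibbsWeight_congr hηρ.1,
      ← gibbsWeight_congr (replaceOn_mem_cyl hση)]
    exact hG.gibbsWeight_mul_cyl ha hb hc hF (hσ.replaceOn hη hση) hη
      fun e he => replaceOn_of_notMem he
  · have hnull {s : Set Config} (hs : ∀ ω ∈ s, ¬ IsConfig ω) : μ s = 0 :=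
      measure_mono_null (fun ω hω h => hs ω hω h) hG.ae_isConfig
    rw [hnull (s := _ ∩ _ ⁻¹' _), hnull, mul_zero, mul_zero]
    · exact fun ω hω h => hex ⟨ω, h, hω⟩
    · intro ω hω h
      have hσ'ω : ∀ e ∈ edgeNbhd F, e ∉ F → σ' e = ω e := fun e he heF => by
        rw [← hoff e heF, hω.1 e he]
      exact hex ⟨replaceOn F σ' ω, hσ'.replaceOn h hσ'ω, replaceOn_mem_cyl hσ'ω, hω.2⟩

theorem gibbsWeight_mul_inter (ha : 0 < a) (hb : 0 < b) (hc : 0 < c)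
    (hG : IsGibbs a b c μ) (hσ : IsConfig σ) (hσ' : IsConfig σ') (hoff : ∀ e ∉ F, σ e = σ' e)
    {X : Set Config} (hX : MeasurableSet X) :
    gibbsWeight a b c F σ' * μ (cyl (edgeNbhd F) σ ∩ replaceOn F σ' ⁻¹' X) =
      gibbsWeight a b c F σ * μ (cyl (edgeNbhd F) σ' ∩ X) := by
  have := hG.1
  have hreplace := measurable_replaceOn F σ'
  let μ₁ := gibbsWeight a b c F σ' • (μ.restrict (cyl (edgeNbhd F) σ)).map (replaceOn F σ')
  let μ₂ := gibbsWeight a b c F σ • μ.restrict (cyl (edgeNbhd F) σ')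
  have hμ₁ {X : Set Config} (hX : MeasurableSet X) : μ₁ X =
      gibbsWeight a b c F σ' * μ (cyl (edgeNbhd F) σ ∩ replaceOn F σ' ⁻¹' X) := by
    rw [Measure.smul_apply, Measure.map_apply hreplace hX, Measure.restrict_apply (hreplace hX),
      Set.inter_comm, smul_eq_mul]
  have hμ₂ {X : Set Config} (hX : MeasurableSet X) :
      μ₂ X = gibbsWeight a b c F σ * μ (cyl (edgeNbhd F) σ' ∩ X) := by
    rw [Measure.smul_apply, Measure.restrict_apply hX, Set.inter_comm, smul_eq_mul]
  have : IsFiniteMeasure μ₁ := ⟨by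
    rw [hμ₁ .univ]
    exact ENNReal.mul_lt_top gibbsWeight_ne_top.lt_top (measure_lt_top _ _)⟩
  have heq : μ₁ = μ₂ := by
    refine ext_of_generate_finite _ (generateFrom_cylsAround F) (isPiSystem_cylsAround F) ?_ ?_
    · intro X hX
      have hXm : MeasurableSet X := by
        obtain ⟨F', ρ, -, rfl⟩ := hX
        exact measurableSet_cyl _ _
      rw [hμ₁ hXm, hμ₂ hXm, hG.gibbsWeight_mul_inter_of_mem_cylsAround ha hb hc hσ hσ' hoff hX]
    · rw [hμ₁ .univ, hμ₂ .univ, Set.preimage_univ, Set.inter_univ, Set.inter_univ]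
      exact hG.gibbsWeight_mul_cyl ha hb hc Finset.Subset.rfl hσ hσ' hoff
  rw [← hμ₁ hX, ← hμ₂ hX, heq]

theorem exists_measure_inter_preimage_le (ha : 0 < a) (hb : 0 < b) (hc : 0 < c)
    (hG : IsGibbs a b c μ) (hσ : IsConfig σ) (hσ' : IsConfig σ') (hoff : ∀ e ∉ F, σ e = σ' e) :
    ∃ K ≠ (⊤ : ENNReal), ∀ B, MeasurableSet B →
      μ (cyl (edgeNbhd F) σ ∩ replaceOn F σ' ⁻¹' B) ≤ K * μ B := by
  have hne := gibbsWeight_ne_zero (F := F) ha hb hc hσ'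
  refine ⟨(gibbsWeight a b c F σ')⁻¹ * gibbsWeight a b c F σ,
    ENNReal.mul_ne_top (ENNReal.inv_ne_top.2 hne) gibbsWeight_ne_top, fun B hB => ?_⟩
  rw [mul_assoc, ← ENNReal.mul_le_iff_le_inv hne gibbsWeight_ne_top,
    hG.gibbsWeight_mul_inter ha hb hc hσ hσ' hoff hB]
  gcongr
  exact Set.inter_subset_right

end IsGibbs

/-- The 1-2 model configurations that can be brought into `B`, within the model, by changing edges
of `F` only. -/
def modifiable (F : Finset HexE) (B : Set Config) : Set Config :=
  {ω | IsConfig ω ∧ ∃ ω' ∈ B, IsConfig ω' ∧ ∀ e ∉ F, ω' e = ω e}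

/-- Finite modifications distort probabilities by bounded factors. This is the substitute for the
finite energy property in a model with hard constraints. -/
def IsModificationTolerant (μ : Measure Config) : Prop :=
  ∀ F, ∃ K ≠ (⊤ : ENNReal), ∀ B, MeasurableSet B → μ (modifiable F B) ≤ K * μ B

theorem IsModificationTolerant.measure_modifiable_eq_zero {μ : Measure Config}
    (hμ : IsModificationTolerant μ) (F : Finset HexE) {B : Set Config} (hB : MeasurableSet B)
    (h : μ B = 0) : μ (modifiable F B) = 0 := by
  obtain ⟨K, -, hK⟩ := hμ F
  simpa [h] using hK B hB

theorem IsGibbs.isModificationTolerant {μ : Measure Config} (ha : 0 < a) (hb : 0 < b) (hc : 0 < c)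
    (hG : IsGibbs a b c μ) : IsModificationTolerant μ := by
  intro F
  let N := edgeNbhd F
  have : Finite N := (finite_edgeNbhd F).to_subtype
  let P := {p : Config × Config // IsConfig p.1 ∧ IsConfig p.2 ∧ ∀ e ∉ F, p.1 e = p.2 e}
  choose K hK hle using fun p : P =>
    hG.exists_measure_inter_preimage_le ha hb hc p.2.1 p.2.2.1 p.2.2.2
  -- Only finitely many pairs of patterns occur on `N`; one representative of each is enough.
  let pattern (p : P) : (N → Bool) × (N → Bool) := (N.domRestrict p.1.1, N.domRestrict p.1.2)
  have : Fintype (Set.range pattern) := Fintype.ofFinite _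
  choose rep hrep using fun q : Set.range pattern => q.2
  refine ⟨∑ q, K (rep q), ENNReal.sum_ne_top.2 fun q _ => hK _, fun B hB => ?_⟩
  have hcover : modifiable F B ⊆
      ⋃ q, cyl N (rep q).1.1 ∩ replaceOn F (rep q).1.2 ⁻¹' B := by
    rintro ω ⟨hω, ω', hω'B, hω', hoff⟩
    let q : Set.range pattern := ⟨_, ⟨(ω, ω'), hω, hω', fun e he => (hoff e he).symm⟩, rfl⟩
    obtain ⟨h₁, h₂⟩ := Prod.mk.inj (hrep q)
    refine Set.mem_iUnion.2 ⟨q, fun e he => (congr_fun h₁ ⟨e, he⟩).symm, ?_⟩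
    have : replaceOn F (rep q).1.2 ω = ω' := funext fun e => by
      by_cases he : e ∈ F
      · rw [replaceOn_of_mem he]
        exact congr_fun h₂ ⟨e, coe_subset_edgeNbhd F he⟩
      · rw [replaceOn_of_notMem he, hoff e he]
    rwa [Set.mem_preimage, this]
  calc μ (modifiable F B) ≤ ∑ q, μ (cyl N (rep q).1.1 ∩ replaceOn F (rep q).1.2 ⁻¹' B) :=
        (measure_mono hcover).trans (measure_iUnion_fintype_le _ _)
    _ ≤ (∑ q, K (rep q)) * μ B := by
        rw [Finset.sum_mul]
        exact Finset.sum_le_sum fun q _ => hle _ B hB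

end Gibbs

/-! ### Invariant events resist finite modifications -/

theorem exists_shiftE_notMem (F G : Finset HexE) : ∃ g : ℤ × ℤ, ∀ e ∈ G, shiftE g e ∉ F := by
  refine ⟨(∑ e ∈ F, |e.1| + ∑ e ∈ G, |e.1| + 1, 0), fun e he hF => ?_⟩
  have hG := G.single_le_sum (f := fun e => |e.1|) (fun _ _ => abs_nonneg _) he
  have hF := F.single_le_sum (f := fun e => |e.1|) (fun _ _ => abs_nonneg _) hF
  simp only [shiftE] at hF
  linarith [le_abs_self (e.1 + (∑ e ∈ F, |e.1| + ∑ e ∈ G, |e.1| + 1)), neg_abs_le e.1]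

theorem exists_measurableSet_off_approx {μ : Measure Config} [IsFiniteMeasure μ]
    (hμ : TransInvariant μ) (F : Finset HexE) {I : Set Config} (hI : MeasurableSet I)
    (hinv : ∀ g, shiftConfig g ⁻¹' I = I) {ε : ℝ} (hε : 0 < ε) :
    ∃ B, MeasurableSet B ∧ μ (symmDiff I B) < ENNReal.ofReal ε ∧
      ∀ ω ω' : Config, (∀ e ∉ F, ω' e = ω e) → ω ∈ B → ω' ∈ B := by
  have hdense := Measure.MeasureDense.of_generateFrom_isSetAlgebra_finite μ
    (isSetAlgebra_measurableCylinders (α := fun _ : HexE => Bool))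
    generateFrom_measurableCylinders.symm
  obtain ⟨B, hB, happrox⟩ := hdense.approx I hI (measure_ne_top _ _) ε hε
  have hBm := hdense.measurable B hB
  obtain ⟨s, S, -, rfl⟩ := (mem_measurableCylinders B).1 hB
  obtain ⟨g, hg⟩ := exists_shiftE_notMem F s
  refine ⟨shiftConfig g ⁻¹' cylinder s S, measurable_shiftConfig g hBm, ?_, ?_⟩
  · have h : symmDiff I (shiftConfig g ⁻¹' cylinder s S) =
        shiftConfig g ⁻¹' symmDiff I (cylinder s S) := by
      rw [Set.preimage_symmDiff, hinv]
    rwa [h, ← Measure.map_apply (measurable_shiftConfig g) (hI.symmDiff hBm), hμ]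
  · intro ω ω' hoff hω
    have h : s.restrict (shiftConfig g ω') = s.restrict (shiftConfig g ω) :=
      funext fun e => hoff _ (hg e e.2)
    rwa [Set.mem_preimage, mem_cylinder, h]

-- Up to a small error, `I` is an event that does not look at the edges of `F`, hence is unaffected
-- by changing them.
theorem IsModificationTolerant.measure_inter_modifiable_compl {μ : Measure Config}
    [IsFiniteMeasure μ] (htol : IsModificationTolerant μ) (hμ : TransInvariant μ)
    (F : Finset HexE) {I : Set Config} (hI : MeasurableSet I)
    (hinv : ∀ g, shiftConfig g ⁻¹' I = I) : μ (I ∩ modifiable F Iᶜ) = 0 := by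
  obtain ⟨K, hK, hmod⟩ := htol F
  have hbound (ε : ℝ) (hε : 0 < ε) :
      μ (I ∩ modifiable F Iᶜ) ≤ (K + 1) * ENNReal.ofReal ε := by
    obtain ⟨B, hB, hIB, hBF⟩ := exists_measurableSet_off_approx hμ F hI hinv hε
    have hsub : I ∩ modifiable F Iᶜ ⊆ modifiable F (B \ I) ∪ I \ B := by
      rintro ω ⟨hωI, hω, ω', hω'I, hω', hoff⟩
      by_cases hωB : ω ∈ B
      · exact Or.inl ⟨hω, ω', ⟨hBF ω ω' hoff hωB, hω'I⟩, hω', hoff⟩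
      · exact Or.inr ⟨hωI, hωB⟩
    calc μ (I ∩ modifiable F Iᶜ) ≤ μ (modifiable F (B \ I)) + μ (I \ B) :=
          (measure_mono hsub).trans (measure_union_le _ _)
      _ ≤ K * μ (symmDiff I B) + μ (symmDiff I B) := by
          refine add_le_add ((hmod _ (hB.diff hI)).trans ?_) (measure_mono Set.subset_union_left)
          gcongr
          exact Set.subset_union_right
      _ ≤ (K + 1) * ENNReal.ofReal ε := by
          rw [add_mul, one_mul]
          gcongr
  have hlim : Filter.Tendsto (fun ε : ℝ => (K + 1) * ENNReal.ofReal ε)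
      (nhdsWithin 0 (Set.Ioi 0)) (nhds ((K + 1) * ENNReal.ofReal 0)) :=
    (ENNReal.Tendsto.const_mul (ENNReal.continuous_ofReal.tendsto 0)
      (Or.inr (by simp [hK]))).mono_left nhdsWithin_le_nhds
  simpa using ge_of_tendsto hlim (by filter_upwards [self_mem_nhdsWithin] using hbound)

/-! ### Filling a region with one type -/

section Fill

variable {R : Finset HexV} {τ : Fin 3 → Bool} {ω : Config} {k : Fin 3} {p q : HexV}

/-- The configuration `ω` with every edge inside `R` given the state it has at a vertex of type
`τ`. -/
def fill (R : Finset HexV) (τ : Fin 3 → Bool) (ω : Config) : Config := fun e =>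
  if end1 e ∈ R ∧ end2 e ∈ R then τ e.2.2 else ω e

theorem fill_edgesAt (v : HexV) (i : Fin 3) :
    fill R τ ω (edgesAt v i) = if v ∈ R ∧ nbr v i ∈ R then τ i else ω (edgesAt v i) := by
  unfold fill
  rw [edgesAt_type, (end_edgesAt v i).1, (end_edgesAt v i).2]
  cases v.2.2 <;> simp [and_comm]

theorem localConf_fill_of_notMem {v : HexV} (hv : v ∉ R) :
    localConf (fill R τ ω) v = localConf ω v :=
  funext fun i => by simp only [localConf, fill_edgesAt, hv, false_and, if_false]

theorem mem_confSet_iff {v : HexV} : v ∈ confSet ω τ ↔ ∀ i, ω (edgesAt v i) = τ i :=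
  funext_iff

theorem confSet_subset_confSet_fill : confSet ω τ ⊆ confSet (fill R τ ω) τ := fun v hv =>
  mem_confSet_iff.2 fun i => by rw [fill_edgesAt, mem_confSet_iff.1 hv i, ite_self]

theorem confSet_fill_subset : confSet (fill R τ ω) τ ⊆ confSet ω τ ∪ R := fun _ hv =>
  or_iff_not_imp_right.2 fun hvR => (localConf_fill_of_notMem hvR).symm.trans hv

/-- The vertices of `R` all of whose neighbours lie in `R`. -/
def interiorIn (R : Finset HexV) : Set HexV := {v | v ∈ R ∧ ∀ i, nbr v i ∈ R}

theorem interiorIn_subset_confSet_fill : interiorIn R ⊆ confSet (fill R τ ω) τ := fun v hv =>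
  mem_confSet_iff.2 fun i => by rw [fill_edgesAt, if_pos ⟨hv.1, hv.2 i⟩]

theorem isConfig_iff : IsConfig ω ↔ ∀ v, ∃ i j, localConf ω v i ≠ localConf ω v j := by
  have hlocal : ∀ f : Fin 3 → Bool, (1 ≤ (Finset.univ.filter fun i => f i = true).card ∧
      (Finset.univ.filter fun i => f i = true).card ≤ 2) ↔ ∃ i j, f i ≠ f j := by decide
  exact forall_congr' fun v => hlocal (localConf ω v)

theorem validConf.exists_forall_ne (h : validConf τ) : ∃ k, ∀ i ≠ k, τ i ≠ τ k := by
  revert τ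
  unfold validConf
  decide

/-- The geometric condition under which `R` can be filled with a type whose state on edges of type
`k` differs from that on the other two. The vertices `p` and `q`, which need not lie in `R`, are
vertices that already have the type in question: they supply the second edge state at those vertices
of `R` having only their `k`-neighbour in `R`. -/
structure IsFillable (k : Fin 3) (p q : HexV) (R : Finset HexV) : Prop where
  nbr_mem : ∀ v ∈ R, nbr v k ∈ R
  exists_nbr_mem : ∀ v ∈ R, ∃ i ≠ k, nbr v i ∈ R ∨ nbr v i = p ∨ nbr v i = q
  isPreconnIn : ∀ D : Set HexV, interiorIn R ⊆ D → D ⊆ R → IsPreconnIn hexGraph D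

namespace IsFillable

theorem isConfig_fill (h : IsFillable k p q R) (hτ : ∀ i ≠ k, τ i ≠ τ k) (hω : IsConfig ω)
    (hp : p ∈ confSet ω τ) (hq : q ∈ confSet ω τ) : IsConfig (fill R τ ω) := by
  have edge_eq : ∀ v i, nbr v i ∈ confSet ω τ → fill R τ ω (edgesAt v i) = τ i := by
    intro v i hi
    rw [← edgesAt_nbr v i]
    exact mem_confSet_iff.1 (confSet_subset_confSet_fill hi) i
  refine isConfig_iff.2 fun v => ?_
  by_cases hv : v ∈ R
  · obtain ⟨i, hik, hi⟩ := h.exists_nbr_mem v hv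
    have hvk : localConf (fill R τ ω) v k = τ k := by
      rw [localConf, fill_edgesAt, if_pos ⟨hv, h.nbr_mem v hv⟩]
    have hvi : localConf (fill R τ ω) v i = τ i := by
      rcases hi with hi | rfl | rfl
      · rw [localConf, fill_edgesAt, if_pos ⟨hv, hi⟩]
      exacts [edge_eq v i hp, edge_eq v i hq]
    exact ⟨i, k, by rw [hvi, hvk]; exact hτ i hik⟩
  · rw [localConf_fill_of_notMem hv]
    exact isConfig_iff.1 hω v

theorem isPreconnIn_confSet_fill_inter (h : IsFillable k p q R) :
    IsPreconnIn hexGraph (confSet (fill R τ ω) τ ∩ R) :=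
  h.isPreconnIn _ (fun _ hv => ⟨interiorIn_subset_confSet_fill hv, hv.1⟩) Set.inter_subset_right

theorem map_rotV (h : IsFillable k p q R) :
    IsFillable (k + 1) (rotV p) (rotV q) (R.map rotV.toEquiv.toEmbedding) := by
  have mem_iff : ∀ v, rotV v ∈ R.map rotV.toEquiv.toEmbedding ↔ v ∈ R := fun v =>
    Finset.mem_map' _
  refine ⟨rotV.surjective.forall.2 fun v hv => ?_, rotV.surjective.forall.2 fun v hv => ?_,
    fun D hID hDR => rotV.surjective.forall.2 fun x hx => rotV.surjective.forall.2 fun y hy => ?_⟩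
  · rw [← rotV_nbr, mem_iff]
    exact h.nbr_mem v ((mem_iff v).1 hv)
  · obtain ⟨i, hik, hi⟩ := h.exists_nbr_mem v ((mem_iff v).1 hv)
    refine ⟨i + 1, fun hne => hik (add_right_cancel hne), ?_⟩
    simpa only [← rotV_nbr, mem_iff, rotV.injective.eq_iff] using hi
  · refine (connIn_preimage_iff rotV).1 (h.isPreconnIn (rotV ⁻¹' D) (fun v hv => hID ?_)
      (fun _ hv => (mem_iff _).1 (hDR hv)) x hx y hy)
    refine ⟨(mem_iff v).2 hv.1, fun i => ?_⟩
    have hi := (mem_iff _).2 (hv.2 (i - 1))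
    rwa [rotV_nbr, sub_add_cancel] at hi

end IsFillable

end Fill

/-! ### Large fillable regions -/

section Rectangle

variable {X₁ X₂ Y₁ Y₂ : ℤ}

/-- The vertices of the cells `(x, y)` of the rectangle `[X₁, X₂] × [Y₁, Y₂]`, without the two
corner cells `(X₁, Y₁)` and `(X₂, Y₂)`, whose outward edges of types b and c leave the rectangle. -/
noncomputable def cutRect (X₁ X₂ Y₁ Y₂ : ℤ) : Finset HexV :=
  {v ∈ Finset.Icc X₁ X₂ ×ˢ Finset.Icc Y₁ Y₂ ×ˢ Finset.univ |
    (v.1, v.2.1) ≠ (X₁, Y₁) ∧ (v.1, v.2.1) ≠ (X₂, Y₂)}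

theorem mem_cutRect {x y : ℤ} {t : Bool} : (x, y, t) ∈ cutRect X₁ X₂ Y₁ Y₂ ↔
    (X₁ ≤ x ∧ x ≤ X₂) ∧ (Y₁ ≤ y ∧ y ≤ Y₂) ∧ ¬(x = X₁ ∧ y = Y₁) ∧ ¬(x = X₂ ∧ y = Y₂) := by
  simp [cutRect, and_assoc]

/-- The vertices of the cells strictly inside the rectangle `[X₁, X₂] × [Y₁, Y₂]`. -/
def rectCore (X₁ X₂ Y₁ Y₂ : ℤ) : Set HexV :=
  {v | (X₁ < v.1 ∧ v.1 < X₂) ∧ Y₁ < v.2.1 ∧ v.2.1 < Y₂}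

theorem mem_rectCore {x y : ℤ} {t : Bool} : (x, y, t) ∈ rectCore X₁ X₂ Y₁ Y₂ ↔
    (X₁ < x ∧ x < X₂) ∧ Y₁ < y ∧ y < Y₂ :=
  Iff.rfl

theorem rectCore_subset_interiorIn : rectCore X₁ X₂ Y₁ Y₂ ⊆ interiorIn (cutRect X₁ X₂ Y₁ Y₂) := by
  rintro ⟨x, y, t⟩ hv
  rw [mem_rectCore] at hv
  refine ⟨mem_cutRect.2 (by omega), fun i => ?_⟩
  cases t <;> fin_cases i <;> simp [nbr_true, nbr_false, mem_cutRect] <;> omega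

theorem exists_nbr_eq_of_mem_rectCore {x y : ℤ} (h : (x, y, false) ∈ rectCore X₁ X₂ Y₁ Y₂)
    (hne : x + y ≠ X₁ + Y₁ + 2) : ∃ i x' y', nbr (x, y, false) i = (x', y', true) ∧
      (x', y', false) ∈ rectCore X₁ X₂ Y₁ Y₂ ∧ x' + y' = x + y - 1 := by
  simp only [mem_rectCore] at h ⊢
  by_cases hx : X₁ + 1 < x
  · exact ⟨1, x - 1, y, by rw [nbr_false]; rfl, by omega⟩
  · exact ⟨2, x, y - 1, by rw [nbr_false]; rfl, by omega⟩

theorem connIn_rectCore_corner {v : HexV} (hv : v ∈ rectCore X₁ X₂ Y₁ Y₂) :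
    ConnIn hexGraph (rectCore X₁ X₂ Y₁ Y₂) v (X₁ + 1, Y₁ + 1, false) := by
  have same_cell : ∀ {x y}, (x, y, false) ∈ rectCore X₁ X₂ Y₁ Y₂ →
      ConnIn hexGraph (rectCore X₁ X₂ Y₁ Y₂) (x, y, true) (x, y, false) := fun h =>
    .of_adj (hexAdj_nbr _ 0) h h
  have lower : ∀ n : ℕ, ∀ x y : ℤ, (x, y, false) ∈ rectCore X₁ X₂ Y₁ Y₂ → x + y = X₁ + Y₁ + 2 + n →
      ConnIn hexGraph (rectCore X₁ X₂ Y₁ Y₂) (x, y, false) (X₁ + 1, Y₁ + 1, false) := by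
    intro n
    induction n with
    | zero =>
      rintro x y ⟨⟨hx, -⟩, hy, -⟩ hxy
      obtain ⟨rfl, rfl⟩ : x = X₁ + 1 ∧ y = Y₁ + 1 := by dsimp at *; omega
      exact .refl _ _ _
    | succ n ih =>
      intro x y h hxy
      obtain ⟨i, x', y', hi, h', hxy'⟩ := exists_nbr_eq_of_mem_rectCore h (by omega)
      have hstep : ConnIn hexGraph (rectCore X₁ X₂ Y₁ Y₂) (x, y, false) (x', y', true) :=
        .of_adj (hi ▸ hexAdj_nbr _ i) h h'
      exact (hstep.trans (same_cell h')).trans (ih x' y' h' (by omega))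
  obtain ⟨x, y, t⟩ := v
  have hlower := lower (x + y - (X₁ + Y₁ + 2)).toNat x y hv <| by
    rw [mem_rectCore] at hv
    omega
  cases t
  exacts [hlower, (same_cell hv).trans hlower]

theorem exists_nbr_nbr_mem_rectCore (hX : X₁ + 3 ≤ X₂) (hY : Y₁ + 3 ≤ Y₂) {v : HexV}
    (hv : v ∈ cutRect X₁ X₂ Y₁ Y₂) : ∃ i j, nbr v i ∈ interiorIn (cutRect X₁ X₂ Y₁ Y₂) ∧
      nbr (nbr v i) j ∈ rectCore X₁ X₂ Y₁ Y₂ := by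
  obtain ⟨x, y, t⟩ := v
  rw [mem_cutRect] at hv
  -- What remains is linear arithmetic over the nine paths of length two starting at `v`.
  cases t <;> simp [nbr_true, nbr_false, Fin.exists_fin_succ, Fin.forall_fin_succ, interiorIn,
    mem_cutRect, mem_rectCore] <;> omega

theorem isPreconnIn_of_interiorIn_cutRect_subset (hX : X₁ + 3 ≤ X₂) (hY : Y₁ + 3 ≤ Y₂)
    {D : Set HexV} (hID : interiorIn (cutRect X₁ X₂ Y₁ Y₂) ⊆ D) (hDR : D ⊆ cutRect X₁ X₂ Y₁ Y₂) :
    IsPreconnIn hexGraph D := by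
  have to_corner : ∀ v ∈ D, ConnIn hexGraph D v (X₁ + 1, Y₁ + 1, false) := by
    intro v hv
    obtain ⟨i, j, hi, hj⟩ := exists_nbr_nbr_mem_rectCore hX hY (hDR hv)
    have hcore := rectCore_subset_interiorIn.trans hID
    exact ((ConnIn.of_adj (hexAdj_nbr _ i) hv (hID hi)).trans
      (.of_adj (hexAdj_nbr _ j) (hID hi) (hcore hj))).trans
        ((connIn_rectCore_corner hj).mono hcore)
  exact fun x hx y hy => (to_corner x hx).trans (to_corner y hy).symm

theorem isFillable_cutRect (hX : X₁ + 3 ≤ X₂) (hY : Y₁ + 3 ≤ Y₂) :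
    IsFillable 0 (X₂, Y₂, false) (X₁, Y₁, true) (cutRect X₁ X₂ Y₁ Y₂) where
  nbr_mem := by
    rintro ⟨x, y, t⟩ hv
    rw [mem_cutRect] at hv
    cases t <;> simpa [nbr_true, nbr_false, mem_cutRect] using hv
  exists_nbr_mem := by
    rintro ⟨x, y, t⟩ hv
    rw [mem_cutRect] at hv
    cases t <;>
      simp [nbr_true, nbr_false, mem_cutRect, Fin.exists_fin_succ] <;> omega
  isPreconnIn _ := isPreconnIn_of_interiorIn_cutRect_subset hX hY

theorem exists_isFillable_zero (K : Finset HexV) {v₁ v₂ : HexV} (h₁ : v₁.2.2 = false)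
    (h₂ : v₂.2.2 = true) : ∃ N : ℕ, ∀ m ≥ N, ∀ m' ≥ N, ∃ R, K ⊆ R ∧
      IsFillable 0 (shiftV (m • (1, 1)) v₁) (shiftV (m' • (-(1, 1))) v₂) R := by
  obtain ⟨M, hM⟩ := exists_subset_box K
  obtain ⟨x₁, y₁, _⟩ := v₁
  obtain ⟨x₂, y₂, _⟩ := v₂
  subst h₁ h₂
  refine ⟨M + 2 + x₁.natAbs + y₁.natAbs + x₂.natAbs + y₂.natAbs, fun m hm m' hm' =>
    ⟨cutRect (x₂ - m') (x₁ + m) (y₂ - m') (y₁ + m), fun ⟨x, y, t⟩ hv => ?_, ?_⟩⟩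
  · have := hM hv
    simp only [box, Set.mem_ofPred_eq, abs_le] at this
    rw [mem_cutRect]
    omega
  · convert isFillable_cutRect (X₁ := x₂ - m') (X₂ := x₁ + m) (Y₁ := y₂ - m') (Y₂ := y₁ + m)
      (by omega) (by omega) using 1 <;> simp [shiftV_apply, sub_eq_add_neg]

end Rectangle

theorem exists_isFillable (k : Fin 3) : ∃ g : ℤ × ℤ, ∀ (K : Finset HexV) {v₁ v₂ : HexV},
    v₁.2.2 = false → v₂.2.2 = true → ∃ N : ℕ, ∀ m ≥ N, ∀ m' ≥ N, ∃ R, K ⊆ R ∧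
      IsFillable k (shiftV (m • g) v₁) (shiftV (m' • (-g)) v₂) R := by
  induction k using Fin.induction with
  | zero => exact ⟨(1, 1), fun K _ _ => exists_isFillable_zero K⟩
  | succ k ih =>
    obtain ⟨g, hg⟩ := ih
    refine ⟨rotL g, fun K v₁ v₂ h₁ h₂ => ?_⟩
    obtain ⟨N, hN⟩ := hg (K.map rotV.symm.toEquiv.toEmbedding) (v₁ := rotV.symm v₁)
      (v₂ := rotV.symm v₂) h₁ h₂
    refine ⟨N, fun m hm m' hm' => ?_⟩
    obtain ⟨R, hKR, hR⟩ := hN m hm m' hm'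
    refine ⟨R.map rotV.toEquiv.toEmbedding, fun v hv => ?_, ?_⟩
    · have := Finset.mem_map_of_mem rotV.toEquiv.toEmbedding (hKR (Finset.mem_map_of_mem _ hv))
      simpa using this
    · have := hR.map_rotV
      rw [Fin.coeSucc_eq_succ] at this
      simpa only [rotV_shiftV, map_nsmul, map_neg, RelIso.apply_symm_apply] using this

/-! ### Uniqueness of the infinite cluster -/

section Uniqueness

variable {τ : Fin 3 → Bool} {ω : Config} {g : ℤ × ℤ}

/-- Every vertex of type `τ` has infinitely many translates by positive multiples of `g` that are
again of type `τ`. -/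
def IsRecurrentAlong (g : ℤ × ℤ) (τ : Fin 3 → Bool) (ω : Config) : Prop :=
  ∀ v ∈ confSet ω τ, ∃ᶠ m : ℕ in Filter.atTop, shiftV (m • g) v ∈ confSet ω τ

theorem ae_isRecurrentAlong {μ : Measure Config} [IsFiniteMeasure μ] (hμ : TransInvariant μ)
    (g : ℤ × ℤ) (τ : Fin 3 → Bool) : ∀ᵐ ω ∂μ, IsRecurrentAlong g τ ω := by
  refine ae_all_iff.2 fun v => ?_
  have hshift : MeasurePreserving (shiftConfig g) μ μ := ⟨measurable_shiftConfig g, hμ g⟩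
  have hs : MeasurableSet {ω | v ∈ confSet ω τ} :=
    measurableSet_setOfPred.2 (measurable_set_iff.1 (measurable_confSet τ) v)
  filter_upwards [hshift.conservative.ae_mem_imp_frequently_image_mem hs.nullMeasurableSet]
    with ω hrec hv
  refine (hrec hv).mono fun m hm => ?_
  rw [shiftConfig_iterate] at hm
  simpa only [Set.mem_ofPred_eq, confSet_shiftConfig, Set.mem_preimage] using hm

/-- Every finite set lies in a finite region that can be filled with type `τ` so that the vertices
of type `τ` in the region are then connected inside it. -/
def HasLargeFills (τ : Fin 3 → Bool) (ω : Config) : Prop :=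
  ∀ K : Finset HexV, ∃ R, K ⊆ R ∧ IsConfig (fill R τ ω) ∧
    IsPreconnIn hexGraph (confSet (fill R τ ω) τ ∩ R)

theorem validConf.exists_hasLargeFills_of_isRecurrentAlong (hτ : validConf τ) :
    ∃ g, ∀ ω, IsConfig ω → IsRecurrentAlong g τ ω → IsRecurrentAlong (-g) τ ω →
      ∀ u, (compIn hexGraph (confSet ω τ) u).Infinite → HasLargeFills τ ω := by
  obtain ⟨k, hk⟩ := hτ.exists_forall_ne
  obtain ⟨g, hg⟩ := exists_isFillable k
  refine ⟨g, fun ω hω hrec hrec' u hu K => ?_⟩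
  obtain ⟨v₁, hv₁, v₂, hv₂, h₁, h₂⟩ := exists_false_true_mem_of_infinite hu
  obtain ⟨N, hN⟩ := hg K h₁ h₂
  obtain ⟨m, hm, hp⟩ := Filter.frequently_atTop.1 (hrec v₁ hv₁) N
  obtain ⟨m', hm', hq⟩ := Filter.frequently_atTop.1 (hrec' v₂ hv₂) N
  obtain ⟨R, hKR, hR⟩ := hN m hm m' hm'
  exact ⟨R, hKR, hR.isConfig_fill hk hω hp hq, hR.isPreconnIn_confSet_fill_inter⟩

/-- The edges with an endpoint in `R`. -/
def incidentEdges (R : Finset HexV) : Finset HexE :=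
  R.biUnion fun v => Finset.univ.image (edgesAt v)

theorem fill_of_notMem_incidentEdges {R : Finset HexV} {e : HexE} (he : e ∉ incidentEdges R) :
    fill R τ ω e = ω e := by
  refine if_neg fun hR => he (Finset.mem_biUnion.2 ⟨_, hR.1, ?_⟩)
  obtain ⟨i, hi⟩ := exists_edgesAt_iff.2 (Or.inl (rfl : end1 e = end1 e))
  exact Finset.mem_image.2 ⟨i, Finset.mem_univ i, hi⟩

/-- The event that there are at least two infinite `τ`-clusters. -/
def nonuniqueEvent (τ : Fin 3 → Bool) : Set Config :=
  {ω | HasTwoInfiniteComps hexGraph (confSet ω τ)}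

theorem measurableSet_nonuniqueEvent (τ : Fin 3 → Bool) : MeasurableSet (nonuniqueEvent τ) :=
  measurableSet_setOfPred.2 (measurable_hasTwoInfiniteComps (measurable_confSet τ))

theorem preimage_shiftConfig_nonuniqueEvent (τ : Fin 3 → Bool) (g : ℤ × ℤ) :
    shiftConfig g ⁻¹' nonuniqueEvent τ = nonuniqueEvent τ := by
  ext ω
  simp only [nonuniqueEvent, HasTwoInfiniteComps, Set.mem_preimage, Set.mem_ofPred_eq,
    confSet_shiftConfig, infinite_compIn_preimage_iff, connIn_preimage_iff]
  constructor
  · rintro ⟨x, y, h⟩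
    exact ⟨_, _, h⟩
  · rintro ⟨x, y, h⟩
    exact ⟨(shiftV g).symm x, (shiftV g).symm y, by simpa only [RelIso.apply_symm_apply] using h⟩

theorem numInfClusters_le_one_of_notMem (h : ω ∉ nonuniqueEvent τ) : numInfClusters ω τ ≤ 1 := by
  rw [numInfClusters, Set.encard_le_one_iff]
  rintro _ _ ⟨⟨u, -, rfl⟩, hu⟩ ⟨⟨v, -, rfl⟩, hv⟩
  have huv : ConnIn hexGraph (confSet ω τ) u v := by
    by_contra huv
    exact h ⟨u, v, hu, hv, huv⟩
  exact Set.ext fun w => ⟨huv.symm.trans, huv.trans⟩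

theorem HasLargeFills.exists_fill_mem_trifurcationEvent (hω : HasLargeFills τ ω) {u : Fin 3 → HexV}
    (hinf : ∀ i, (compIn hexGraph (confSet ω τ) (u i)).Infinite)
    (hsep : Pairwise fun i j => ¬ConnIn hexGraph (confSet ω τ) (u i) (u j)) :
    ∃ R, IsConfig (fill R τ ω) ∧ fill R τ ω ∈ trifurcationEvent τ R := by
  classical
  obtain ⟨R, hKR, hR, hconn⟩ := hω (Finset.univ.image u)
  obtain ⟨w, hw⟩ := exists_isTrifurcation_of_fill hexGraph_neighborSet_finite R.finite_toSet
    confSet_subset_confSet_fill confSet_fill_subset hconn u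
    (fun i => hKR (Finset.mem_image_of_mem u (Finset.mem_univ i))) hinf hsep
  refine ⟨R, hR, {v ∈ R | v ∈ confSet (fill R τ ω) τ}, Finset.filter_subset _ _, w, ?_⟩
  rwa [Finset.coe_filter, Set.ofPred_and, Set.inter_comm]

theorem HasLargeFills.exists_fill_notMem_nonuniqueEvent (hω : HasLargeFills τ ω) {x y : HexV}
    (hall : ∀ v, (compIn hexGraph (confSet ω τ) v).Infinite →
      ConnIn hexGraph (confSet ω τ) v x ∨ ConnIn hexGraph (confSet ω τ) v y) :
    ∃ R, IsConfig (fill R τ ω) ∧ fill R τ ω ∉ nonuniqueEvent τ := by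
  obtain ⟨R, hKR, hR, hconn⟩ := hω {x, y}
  refine ⟨R, hR, not_hasTwoInfiniteComps_of_fill confSet_subset_confSet_fill confSet_fill_subset
    hconn fun v hv => ?_⟩
  rcases hall v hv with hvx | hvy
  exacts [⟨x, hKR (by simp), hvx⟩, ⟨y, hKR (by simp), hvy⟩]

theorem HasLargeFills.exists_fill_of_mem_nonuniqueEvent (hω : HasLargeFills τ ω)
    (h : ω ∈ nonuniqueEvent τ) :
    ∃ R, IsConfig (fill R τ ω) ∧
      (fill R τ ω ∈ trifurcationEvent τ R ∨ fill R τ ω ∉ nonuniqueEvent τ) := by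
  obtain ⟨x, y, hx, hy, hxy⟩ := h
  by_cases hall : ∀ v, (compIn hexGraph (confSet ω τ) v).Infinite →
      ConnIn hexGraph (confSet ω τ) v x ∨ ConnIn hexGraph (confSet ω τ) v y
  · obtain ⟨R, hR, hmem⟩ := hω.exists_fill_notMem_nonuniqueEvent hall
    exact ⟨R, hR, Or.inr hmem⟩
  · push Not at hall
    obtain ⟨z, hz, hzx, hzy⟩ := hall
    have hinf : ∀ i, (compIn hexGraph (confSet ω τ) (![x, y, z] i)).Infinite := by
      simp [Fin.forall_fin_succ, hx, hy, hz]
    have hsep : Pairwise fun i j =>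
        ¬ConnIn hexGraph (confSet ω τ) (![x, y, z] i) (![x, y, z] j) := by
      intro i j hij
      fin_cases i <;> fin_cases j
      exacts [absurd rfl hij, hxy, fun h => hzx h.symm, fun h => hxy h.symm, absurd rfl hij,
        fun h => hzy h.symm, hzx, hzy, absurd rfl hij]
    obtain ⟨R, hR, hmem⟩ := hω.exists_fill_mem_trifurcationEvent hinf hsep
    exact ⟨R, hR, Or.inl hmem⟩

theorem at_most_one_infinite_homogeneous_cluster_general {μ : Measure Config}
    [IsFiniteMeasure μ] (htol : IsModificationTolerant μ) (hTI : TransInvariant μ)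
    (hτ : validConf τ) : ∀ᵐ ω ∂μ, IsConfig ω → numInfClusters ω τ ≤ 1 := by
  obtain ⟨g, hg⟩ := hτ.exists_hasLargeFills_of_isRecurrentAlong
  have htrif : ∀ᵐ ω ∂μ, ∀ R, ω ∉ modifiable (incidentEdges R) (trifurcationEvent τ R) :=
    ae_all_iff.2 fun R => measure_eq_zero_iff_ae_notMem.1 <|
      htol.measure_modifiable_eq_zero _ (measurableSet_trifurcationEvent τ R)
        (measure_trifurcationEvent_eq_zero hTI τ R)
  have hmerge : ∀ᵐ ω ∂μ, ∀ R,
      ω ∉ nonuniqueEvent τ ∩ modifiable (incidentEdges R) (nonuniqueEvent τ)ᶜ :=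
    ae_all_iff.2 fun R => measure_eq_zero_iff_ae_notMem.1 <|
      htol.measure_inter_modifiable_compl hTI _ (measurableSet_nonuniqueEvent τ)
        (preimage_shiftConfig_nonuniqueEvent τ)
  filter_upwards [ae_isRecurrentAlong hTI g τ, ae_isRecurrentAlong hTI (-g) τ, htrif, hmerge]
    with ω hrec hrec' htrif hmerge hω
  refine numInfClusters_le_one_of_notMem fun hI => ?_
  obtain ⟨u, -, hu, -⟩ := id hI
  obtain ⟨R, hR, hmem | hmem⟩ :=
    (hg ω hω hrec hrec' u hu).exists_fill_of_mem_nonuniqueEvent hI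
  · exact htrif R ⟨hω, _, hmem, hR, fun _ => fill_of_notMem_incidentEdges⟩
  · exact hmerge R ⟨hI, hω, _, hmem, hR, fun _ => fill_of_notMem_incidentEdges⟩

end Uniqueness

/-- For any translation-invariant Gibbs measure `μ` for the 1-2 model (with any
weights `a, b, c > 0`) and any of the six local configuration types `τ₀`, `μ`-almost every
1-2 model configuration has at most one infinite `τ₀`-cluster. -/
theorem at_most_one_infinite_homogeneous_cluster
    (a b c : ℝ) (ha : 0 < a) (hb : 0 < b) (hc : 0 < c)
    (μ : Measure Config) (hGibbs : IsGibbs a b c μ) (hTI : TransInvariant μ)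
    (τ₀ : Fin 3 → Bool) (hτ₀ : validConf τ₀) :
    μ {ω : Config | IsConfig ω ∧ numInfClusters ω τ₀ ≤ 1} = 1 := by
  have := hGibbs.1
  have hunique := at_most_one_infinite_homogeneous_cluster_general
    (hGibbs.isModificationTolerant ha hb hc) hTI hτ₀
  have hae : ∀ᵐ ω ∂μ, IsConfig ω ∧ numInfClusters ω τ₀ ≤ 1 := by
    filter_upwards [hGibbs.ae_isConfig, hunique] with ω hω h using ⟨hω, h hω⟩
  rw [measure_congr (Filter.eventuallyEq_univ.2 hae)]
  exact measure_univ
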